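/- Fix an integer n ≥ 1. There exists a constant C > 0 such that, as Y → ∞, (−1)^{n+1} ∑_{mr ≤ Y} Λ(r) log^n r = (−1)^{n+1} (1/(n+1)) Y log^{n+1} Y + (−1)^{n+1} ∑_{k=0}^{n} binom(n,k) (−1)^k k! (−1 + ∑_{j=0}^{k} (−1)^j C_j) Y log^{n−k} Y + n! A_n Y + O(Y e^{−C√(log Y)}), where the sum on the left runs over all ordered pairs (m, r) of positive integers with mr ≤ Y. -/

import Mathlib

open Complex Finset

/-- `∑_{mr ≤ Y} Λ(r) log^n r`, summed over all ordered pairs `(m, r)` of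
positive integers with `mr ≤ Y`. -/
noncomputable def vonMangoldtPairSum (n : ℕ) (Y : ℝ) : ℝ :=
  ∑ p ∈ (Finset.Icc 1 ⌊Y⌋₊ ×ˢ Finset.Icc 1 ⌊Y⌋₊).filter
      (fun p : ℕ × ℕ => ((p.1 : ℝ) * (p.2 : ℝ) ≤ Y)),
    ArithmeticFunction.vonMangoldt p.2 * Real.log p.2 ^ n

/-- The full main term, expressed via the Laurent coefficients `C j` of `ζ`
and `A j` of `ζ'/ζ` about `s = 1`. -/
noncomputable def Mterm (C A : ℕ → ℂ) (n : ℕ) (Y : ℝ) : ℂ :=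
  (-1 : ℂ) ^ (n + 1) * (1 / ((n : ℂ) + 1)) * ((Y * Real.log Y ^ (n + 1) : ℝ) : ℂ)
  + (-1 : ℂ) ^ (n + 1) *
      ∑ k ∈ Finset.range (n + 1),
        (n.choose k : ℂ) * (-1 : ℂ) ^ k * (k.factorial : ℂ) *
          (-1 + ∑ j ∈ Finset.range (k + 1), (-1 : ℂ) ^ j * C j) *
          ((Y * Real.log Y ^ (n - k) : ℝ) : ℂ)
  + (n.factorial : ℂ) * A n * ((Y : ℝ) : ℂ)

/-!
The Mellin transform `∫ S(u) u^(-s-1) du` of the summatory function `S` is, up to sign, `ζ(s)/s`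
times the `n`-th derivative of `ζ'/ζ`. Its principal part at `s = 1` is the Mellin transform of the
main term `M`, so the Mellin transform of `S - M` continues holomorphically to the classical
zero-free region, where it is bounded by powers of `log T`. Shifting the contour there bounds the
Riesz mean `∫ (x - u) (S - M)(u) du`, whose Perron kernel `1 / ((s + 1) (s + 2))` is absolutely
integrable. Since `S` is monotone and `M` is almost Lipschitz, averaging against a narrow tent
function recovers the bound for `S - M` itself.

The zero-free region comes from `3 + 4 cos θ + cos 2θ ≥ 0`, using only local bounds for `ζ` near the
line `Re s = 1`: Borel–Carathéodory together with the removal of one zero by a Blaschke factor.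
-/

open Filter Topology MeasureTheory Metric

section LogDerivBounds

variable {f : ℂ → ℂ} {w ρ z : ℂ} {R M B : ℝ}

theorem exists_hasDerivAt_logDeriv_and_eq_mul_exp (hR : 0 < R)
    (hf : DifferentiableOn ℂ f (ball w R)) (hne : ∀ z ∈ ball w R, f z ≠ 0) :
    ∃ h : ℂ → ℂ, h w = 0 ∧ ∀ z ∈ ball w R,
      HasDerivAt h (logDeriv f z) z ∧ f z = f w * cexp (h z) := by
  have hd : DifferentiableOn ℂ (logDeriv f) (ball w R) := (hf.deriv isOpen_ball).div hf hne
  obtain ⟨h, hw, hh⟩ := hd.isExactOn_ball.with_val_at w 0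
  have hhd : DifferentiableOn ℂ h (ball w R) := fun z hz =>
    (hh z hz).differentiableAt.differentiableWithinAt
  have heq : Set.EqOn (logDeriv f) (logDeriv fun z => cexp (h z)) (ball w R) := fun z hz => by
    rw [logDeriv_apply (fun z => cexp (h z)), (hh z hz).cexp.deriv,
      mul_div_cancel_left₀ _ (exp_ne_zero _)]
  obtain ⟨c, -, hc⟩ := (logDeriv_eqOn_iff hf hhd.cexp isOpen_ball
    (convex_ball w R).isPreconnected (fun z _ => exp_ne_zero _) hne).mp heq
  have hcw : f w = c := by simpa [hw] using hc (mem_ball_self hR)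
  exact ⟨h, hw, fun z hz => ⟨hh z hz, by rw [hcw]; exact hc hz⟩⟩

theorem norm_logDeriv_le_of_forall_ne_zero (hR : 0 < R) (hM : 0 < M)
    (hf : DifferentiableOn ℂ f (ball w R)) (hne : ∀ z ∈ ball w R, f z ≠ 0)
    (hb : ∀ z ∈ ball w R, ‖f z‖ ≤ Real.exp M * ‖f w‖) (hz : ‖z - w‖ ≤ 2 / 3 * R) :
    ‖logDeriv f z‖ ≤ 60 * M / R := by
  obtain ⟨h, hw, hh⟩ := exists_hasDerivAt_logDeriv_and_eq_mul_exp hR hf hne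
  have hfw : 0 < ‖f w‖ := norm_pos_iff.mpr (hne w (mem_ball_self hR))
  have hre : ∀ x ∈ ball w R, (h x).re ≤ M := fun x hx => by
    have hx' := hb x hx
    rw [(hh x hx).2, norm_mul, norm_exp, mul_comm] at hx'
    exact Real.exp_le_exp.mp (le_of_mul_le_mul_right hx' hfw)
  have hnorm : ∀ x, ‖x - w‖ ≤ 5 / 6 * R → ‖h x‖ ≤ 10 * M := fun x hx => by
    have hball : ∀ y ∈ ball (0 : ℂ) R, w + y ∈ ball w R := fun y hy => by simpa using hy
    have hxw : x - w ∈ ball (0 : ℂ) R := by rw [mem_ball_zero_iff]; linarith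
    have hdiff : DifferentiableOn ℂ (fun y => h (w + y)) (ball 0 R) := fun y hy =>
      ((hh _ (hball y hy)).1.differentiableAt.comp y (by fun_prop)).differentiableWithinAt
    have hbc := borelCaratheodory_zero hM hdiff (fun y hy => hre _ (hball y hy)) hR hxw (by simpa)
    rw [add_sub_cancel] at hbc
    refine hbc.trans ?_
    rw [div_le_iff₀ (by linarith)]
    nlinarith
  have hsub : closedBall z (R / 6) ⊆ closedBall w (5 / 6 * R) :=
    closedBall_subset_closedBall' (by rw [dist_eq_norm]; linarith)
  have hdiff : DiffContOnCl ℂ h (ball z (R / 6)) := by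
    refine DifferentiableOn.diffContOnCl fun y hy => ?_
    rw [closure_ball _ (by positivity)] at hy
    exact (hh y (closedBall_subset_ball (by linarith) (hsub hy))).1.differentiableAt
      |>.differentiableWithinAt
  have hzw : z ∈ ball w R := by rw [mem_ball_iff_norm]; linarith
  have hcauchy := norm_deriv_le_of_forall_mem_sphere_norm_le (by positivity) hdiff
    fun y hy => hnorm y (mem_closedBall_iff_norm.mp (hsub (sphere_subset_closedBall hy)))
  rw [← (hh z hzw).1.deriv]
  exact hcauchy.trans_eq (by field_simp; norm_num)

theorem diffContOnCl_dslope (hf : DiffContOnCl ℂ f (ball w R)) (hρ : ρ ∈ ball w R) :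
    DiffContOnCl ℂ (dslope f ρ) (ball w R) :=
  have hnhds := isOpen_ball.mem_nhds hρ
  ⟨(differentiableOn_dslope hnhds).mpr hf.differentiableOn,
    (continuousOn_dslope (mem_of_superset hnhds subset_closure)).mpr
      ⟨hf.continuousOn, hf.differentiableAt isOpen_ball hρ⟩⟩

/-- The quotient of `f` by the Blaschke factor of the disc `ball w R` at a zero `ρ` of `f`, used to
remove that zero. Writing it with `dslope` gives the right value at `ρ` as well. -/
noncomputable def divBlaschke (f : ℂ → ℂ) (w ρ : ℂ) (R : ℝ) (z : ℂ) : ℂ :=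
  dslope f ρ z * ((R ^ 2 - (starRingEnd ℂ) (ρ - w) * (z - w)) / R)

theorem diffContOnCl_divBlaschke (hf : DiffContOnCl ℂ f (ball w R)) (hρ : ρ ∈ ball w R) :
    DiffContOnCl ℂ (divBlaschke f w ρ R) (ball w R) :=
  (diffContOnCl_dslope hf hρ).smul
    (f := fun z : ℂ => (R ^ 2 - (starRingEnd ℂ) (ρ - w) * (z - w)) / R)
    (Differentiable.diffContOnCl (by fun_prop))

theorem dslope_of_eq_zero (hρ : f ρ = 0) (hz : z ≠ ρ) : dslope f ρ z = f z / (z - ρ) := by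
  rw [dslope_of_ne _ hz, slope_def_field, hρ, sub_zero]

theorem divBlaschke_eq_mul_canonicalFactor (hR : 0 < R) (hρ : f ρ = 0) (hz : z ≠ ρ) :
    divBlaschke f w ρ R z = f z * canonicalFactor R (ρ - w) (z - w) := by
  have hRc : (R : ℂ) ≠ 0 := by exact_mod_cast hR.ne'
  have := sub_ne_zero.mpr hz
  rw [divBlaschke, dslope_of_eq_zero hρ hz, canonicalFactor_apply, sub_sub_sub_cancel_right]
  field_simp

theorem norm_divBlaschke_self (hR : 0 < R) (hρ : f ρ = 0) (hw : w ≠ ρ) :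
    ‖divBlaschke f w ρ R w‖ = R / ‖ρ - w‖ * ‖f w‖ := by
  rw [divBlaschke, dslope_of_eq_zero hρ hw, norm_mul, norm_div, norm_div, norm_sub_rev w, sub_self,
    mul_zero, sub_zero, norm_pow, norm_real, Real.norm_of_nonneg hR.le]
  field_simp

theorem norm_divBlaschke_le (hf : DiffContOnCl ℂ f (ball w R)) (hρ : f ρ = 0)
    (hρR : ρ ∈ ball w R) (hb : ∀ z ∈ closedBall w R, ‖f z‖ ≤ B) (hz : z ∈ closedBall w R) :
    ‖divBlaschke f w ρ R z‖ ≤ B := by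
  have hR : 0 < R := pos_of_mem_ball hρR
  refine norm_le_of_forall_mem_frontier_norm_le isBounded_ball (diffContOnCl_divBlaschke hf hρR)
    (fun y hy => ?_) (by rwa [closure_ball _ hR.ne'])
  rw [frontier_ball _ hR.ne'] at hy
  have hyρ : y ≠ ρ := fun h => (mem_ball.mp hρR).ne (h ▸ mem_sphere.mp hy)
  rw [divBlaschke_eq_mul_canonicalFactor hR hρ hyρ, norm_mul,
    norm_canonicalFactor_eval_circle_eq_one (by simpa [dist_eq_norm] using hρR)
      (by simpa [dist_eq_norm] using hy), mul_one]
  exact hb y (sphere_subset_closedBall hy)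

theorem eq_zero_of_divBlaschke_eq_zero (hρ : f ρ = 0) (hρR : ρ ∈ ball w R) (hz : z ∈ ball w R)
    (h : divBlaschke f w ρ R z = 0) : f z = 0 := by
  rcases eq_or_ne z ρ with rfl | hzρ
  · exact hρ
  · rw [divBlaschke_eq_mul_canonicalFactor (pos_of_mem_ball hρR) hρ hzρ] at h
    refine (mul_eq_zero.mp h).resolve_right (canonicalFactor_ne_zero
      (by simpa [dist_eq_norm] using hρR) ?_ (by simpa))
    simpa [dist_eq_norm] using (mem_ball.mp hz).le

theorem logDeriv_eq_logDeriv_divBlaschke_add (hf : DiffContOnCl ℂ f (ball w R)) (hfw : f w ≠ 0)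
    (hρ : f ρ = 0) (hρR : ρ ∈ ball w R) :
    logDeriv f w = logDeriv (divBlaschke f w ρ R) w +
      ((starRingEnd ℂ) (ρ - w) / R ^ 2 - 1 / (ρ - w)) := by
  have hR : 0 < R := pos_of_mem_ball hρR
  have hRc : (R : ℂ) ≠ 0 := by exact_mod_cast hR.ne'
  have hwρ : w ≠ ρ := fun h => hfw (h ▸ hρ)
  have hρw : ρ - w ≠ 0 := sub_ne_zero.mpr hwρ.symm
  have hd : DifferentiableAt ℂ (dslope f ρ) w :=
    (diffContOnCl_dslope hf hρR).differentiableAt isOpen_ball (mem_ball_self hR)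
  have hdw : dslope f ρ w ≠ 0 := by
    rw [dslope_of_eq_zero hρ hwρ]
    exact div_ne_zero hfw (sub_ne_zero.mpr hwρ)
  have hq : HasDerivAt (fun z : ℂ => (R ^ 2 - (starRingEnd ℂ) (ρ - w) * (z - w)) / R)
      (-(starRingEnd ℂ) (ρ - w) / R) w := by
    simpa using ((((hasDerivAt_id w).sub_const w).const_mul
      ((starRingEnd ℂ) (ρ - w))).const_sub ((R : ℂ) ^ 2)).div_const (R : ℂ)
  have hqw : ((R : ℂ) ^ 2 - (starRingEnd ℂ) (ρ - w) * (w - w)) / R = R := by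
    rw [sub_self, mul_zero, sub_zero, pow_two, mul_div_cancel_right₀ _ hRc]
  have hfd : f = fun z => (z - ρ) * dslope f ρ z := funext fun z => by
    simpa [hρ] using (sub_smul_dslope f ρ z).symm
  have hlogf : logDeriv f w = 1 / (w - ρ) + logDeriv (dslope f ρ) w := by
    conv_lhs => rw [hfd]
    rw [logDeriv_mul (f := fun z => z - ρ) w (sub_ne_zero.mpr hwρ) hdw (by fun_prop) hd,
      logDeriv_apply fun z => z - ρ, deriv_sub_const_fun, deriv_id'']
  unfold divBlaschke
  rw [hlogf, logDeriv_mul w hdw (hqw.symm ▸ hRc) hd hq.differentiableAt,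
    logDeriv_apply fun z : ℂ => (R ^ 2 - (starRingEnd ℂ) (ρ - w) * (z - w)) / R, hq.deriv, hqw,
    ← neg_sub ρ w]
  field_simp
  ring

theorem re_conj_div_sq_sub_one_div_nonneg (hre : ρ.re ≤ 0) (hρR : ‖ρ‖ ≤ R) (hρ : ρ ≠ 0) :
    0 ≤ ((starRingEnd ℂ) ρ / R ^ 2 - 1 / ρ).re := by
  have heq : ((starRingEnd ℂ) ρ / R ^ 2 - 1 / ρ).re = -ρ.re * (1 / ‖ρ‖ ^ 2 - 1 / R ^ 2) := by
    rw [sub_re, one_div, inv_re, normSq_eq_norm_sq, ← ofReal_pow, div_ofReal_re, conj_re]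
    ring
  rw [heq]
  have := norm_pos_iff.mpr hρ
  refine mul_nonneg (neg_nonneg.mpr hre) (sub_nonneg.mpr ?_)
  gcongr

theorem nonneg_of_forall_norm_le_exp_mul (hR : 0 < R) (hfw : f w ≠ 0)
    (hb : ∀ z ∈ closedBall w R, ‖f z‖ ≤ Real.exp M * ‖f w‖) : 0 ≤ M :=
  Real.one_le_exp_iff.mp <| (le_mul_iff_one_le_left (norm_pos_iff.mpr hfw)).mp
    (hb w (mem_closedBall_self hR.le))

theorem neg_re_logDeriv_le_of_forall_ne_zero (hR : 0 < R)
    (hf : DifferentiableOn ℂ f (ball w R)) (hne : ∀ z ∈ ball w (R / 2), f z ≠ 0)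
    (hb : ∀ z ∈ closedBall w R, ‖f z‖ ≤ Real.exp M * ‖f w‖) :
    -(logDeriv f w).re ≤ 120 * (M + Real.log 2) / R := by
  have hM := nonneg_of_forall_norm_le_exp_mul hR (hne w (mem_ball_self (half_pos hR))) hb
  have hlog2 : 0 < Real.log 2 := Real.log_pos one_lt_two
  have hball : ball w (R / 2) ⊆ ball w R := ball_subset_ball (by linarith)
  have hself : ‖w - w‖ ≤ 2 / 3 * (R / 2) := by
    rw [sub_self, norm_zero]
    positivity
  calc -(logDeriv f w).re ≤ ‖logDeriv f w‖ := (neg_le_abs _).trans (abs_re_le_norm _)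
    _ ≤ 60 * (M + Real.log 2) / (R / 2) :=
        norm_logDeriv_le_of_forall_ne_zero (half_pos hR) (add_pos_of_nonneg_of_pos hM hlog2)
          (hf.mono hball) hne (fun z hz => (hb z (ball_subset_closedBall (hball hz))).trans
            (by gcongr; linarith)) hself
    _ = 120 * (M + Real.log 2) / R := by
        field_simp
        norm_num

theorem neg_re_logDeriv_le_neg_re_logDeriv_divBlaschke (hf : DiffContOnCl ℂ f (ball w R))
    (hfw : f w ≠ 0) (hρ : f ρ = 0) (hρR : ρ ∈ ball w R) (hre : ρ.re ≤ w.re) :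
    -(logDeriv f w).re ≤ -(logDeriv (divBlaschke f w ρ R) w).re := by
  have := re_conj_div_sq_sub_one_div_nonneg (R := R) (by rw [sub_re]; linarith)
    (mem_ball_iff_norm.mp hρR).le (sub_ne_zero.mpr fun h => hfw (h ▸ hρ))
  rw [logDeriv_eq_logDeriv_divBlaschke_add hf hfw hρ hρR, add_re]
  linarith

theorem mul_norm_le_norm_divBlaschke_self {k : ℝ} (hfw : f w ≠ 0) (hρ : f ρ = 0)
    (hρR : ρ ∈ ball w R) (hkρ : k * ‖ρ - w‖ ≤ R) :
    k * ‖f w‖ ≤ ‖divBlaschke f w ρ R w‖ := by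
  have hwρ : w ≠ ρ := fun h => hfw (h ▸ hρ)
  rw [norm_divBlaschke_self (pos_of_mem_ball hρR) hρ hwρ]
  gcongr
  rwa [le_div_iff₀ (norm_pos_iff.mpr (sub_ne_zero.mpr hwρ.symm))]

theorem neg_re_logDeriv_le (hR : 0 < R) (hf : DiffContOnCl ℂ f (ball w R)) (hfw : f w ≠ 0)
    (hzero : ∀ z ∈ ball w R, f z = 0 → z.re ≤ w.re)
    (hb : ∀ z ∈ closedBall w R, ‖f z‖ ≤ Real.exp M * ‖f w‖) :
    -(logDeriv f w).re ≤ 120 * (M + Real.log 2) / R := by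
  have hlog2 : 0 < Real.log 2 := Real.log_pos one_lt_two
  -- Each zero within `R / 2` of the centre, once divided out, lowers `M` by `log 2`.
  obtain ⟨N, hN⟩ := exists_nat_gt (M / Real.log 2)
  rw [div_lt_iff₀ hlog2] at hN
  induction N generalizing f M with
  | zero =>
    have hM := nonneg_of_forall_norm_le_exp_mul hR hfw hb
    rw [Nat.cast_zero, zero_mul] at hN
    linarith
  | succ N ih =>
    by_cases hne : ∀ z ∈ ball w (R / 2), f z ≠ 0
    · exact neg_re_logDeriv_le_of_forall_ne_zero hR hf.differentiableOn hne hb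
    · push Not at hne
      obtain ⟨ρ, hρ, hfρ⟩ := hne
      have hρR : ρ ∈ ball w R := ball_subset_ball (by linarith) hρ
      rw [mem_ball_iff_norm] at hρ
      have hgw := mul_norm_le_norm_divBlaschke_self (k := 2) hfw hfρ hρR (by linarith)
      have hgb : ∀ z ∈ closedBall w R, ‖divBlaschke f w ρ R z‖ ≤
          Real.exp (M - Real.log 2) * ‖divBlaschke f w ρ R w‖ := fun z hz =>
        (norm_divBlaschke_le hf hfρ hρR hb hz).trans <| by
          rw [Real.exp_sub, Real.exp_log two_pos, div_mul_eq_mul_div, mul_div_assoc]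
          gcongr
          linarith
      have hgle := ih (diffContOnCl_divBlaschke hf hρR)
        (norm_pos_iff.mp (by linarith [norm_pos_iff.mpr hfw]))
        (fun z hz h => hzero z hz (eq_zero_of_divBlaschke_eq_zero hfρ hρR hz h)) hgb
        (by push_cast at hN; linarith)
      calc -(logDeriv f w).re ≤ -(logDeriv (divBlaschke f w ρ R) w).re :=
            neg_re_logDeriv_le_neg_re_logDeriv_divBlaschke hf hfw hfρ hρR (hzero ρ hρR hfρ)
        _ ≤ 120 * (M - Real.log 2 + Real.log 2) / R := hgle
        _ ≤ 120 * (M + Real.log 2) / R := by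
            gcongr
            linarith

theorem neg_re_logDeriv_le_of_zero (hf : DiffContOnCl ℂ f (ball w R)) (hfw : f w ≠ 0)
    (hzero : ∀ z ∈ ball w R, f z = 0 → z.re ≤ w.re)
    (hb : ∀ z ∈ closedBall w R, ‖f z‖ ≤ Real.exp M * ‖f w‖) (hρ : f ρ = 0)
    (hρR : ρ ∈ ball w R) :
    -(logDeriv f w).re ≤ 120 * (M + Real.log 2) / R -
      ((starRingEnd ℂ) (ρ - w) / R ^ 2 - 1 / (ρ - w)).re := by
  have hle : ‖f w‖ ≤ ‖divBlaschke f w ρ R w‖ := by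
    simpa only [one_mul] using mul_norm_le_norm_divBlaschke_self (k := 1) hfw hρ hρR
      (by simpa only [one_mul] using (mem_ball_iff_norm.mp hρR).le)
  have hgle := neg_re_logDeriv_le (pos_of_mem_ball hρR) (diffContOnCl_divBlaschke hf hρR)
    (norm_pos_iff.mp ((norm_pos_iff.mpr hfw).trans_le hle))
    (fun z hz h => hzero z hz (eq_zero_of_divBlaschke_eq_zero hρ hρR hz h))
    (fun z hz => (norm_divBlaschke_le hf hρ hρR hb hz).trans (by gcongr))
  rw [logDeriv_eq_logDeriv_divBlaschke_add hf hfw hρ hρR, add_re, neg_add]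
  linarith

end LogDerivBounds

section FractMellin

variable {s : ℂ}

/-- The fractional part on `(1, ∞)`, extended by zero so that it has a Mellin transform
holomorphic on a whole half-plane. -/
noncomputable def fractIoi : ℝ → ℂ := (Set.Ioi 1).indicator fun t => ((Int.fract t : ℝ) : ℂ)

theorem fractIoi_of_lt {t : ℝ} (ht : 1 < t) : fractIoi t = ((Int.fract t : ℝ) : ℂ) :=
  Set.indicator_of_mem (Set.mem_Ioi.mpr ht) _

theorem norm_fractIoi_le_one (t : ℝ) : ‖fractIoi t‖ ≤ 1 :=
  (norm_indicator_le_norm_self _ t).trans <| by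
    rw [norm_real, Real.norm_of_nonneg (Int.fract_nonneg t)]
    exact (Int.fract_lt_one t).le

theorem measurable_fractIoi : Measurable fractIoi :=
  (measurable_ofReal.comp measurable_fract).indicator measurableSet_Ioi

theorem locallyIntegrableOn_fractIoi : LocallyIntegrableOn fractIoi (Set.Ioi 0) :=
  ((locallyIntegrable_const (1 : ℝ)).mono measurable_fractIoi.aestronglyMeasurable
    (.of_forall fun t => by simpa using norm_fractIoi_le_one t)).locallyIntegrableOn _

theorem fractIoi_isBigO_atTop : fractIoi =O[atTop] (fun t : ℝ => t ^ (-(0 : ℝ))) :=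
  .of_bound 1 (.of_forall fun t => by simpa using norm_fractIoi_le_one t)

theorem fractIoi_isBigO_nhdsGT_zero (b : ℝ) : fractIoi =O[𝓝[>] 0] (fun t : ℝ => t ^ (-b)) := by
  refine .of_bound 0 ?_
  filter_upwards [mem_nhdsWithin_of_mem_nhds (Iio_mem_nhds one_pos)] with t ht
  simp [fractIoi, not_lt.mpr (Set.mem_Iio.mp ht).le]

theorem differentiableAt_mellin_fractIoi (hs : s.re < 0) :
    DifferentiableAt ℂ (mellin fractIoi) s :=
  mellin_differentiableAt_of_isBigO_rpow locallyIntegrableOn_fractIoi fractIoi_isBigO_atTop hs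
    (fractIoi_isBigO_nhdsGT_zero (s.re - 1)) (by linarith)

theorem mellin_fractIoi_eq (s : ℂ) :
    mellin fractIoi s = ∫ t in Set.Ioi (1 : ℝ), (t : ℂ) ^ (s - 1) * ((Int.fract t : ℝ) : ℂ) := by
  simp only [mellin, fractIoi, smul_eq_mul,
    ← Set.indicator_mul_right _ fun t : ℝ => (t : ℂ) ^ (s - 1)]
  rw [setIntegral_indicator measurableSet_Ioi, Set.inter_eq_right.mpr]
  exact Set.Ioi_subset_Ioi zero_le_one

theorem integrableOn_cpow_mul_fract (hs : s.re < 0) :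
    IntegrableOn (fun t : ℝ => (t : ℂ) ^ (s - 1) * ((Int.fract t : ℝ) : ℂ)) (Set.Ioi 1) := by
  have hconv : MellinConvergent fractIoi s :=
    mellinConvergent_of_isBigO_rpow locallyIntegrableOn_fractIoi fractIoi_isBigO_atTop hs
      (fractIoi_isBigO_nhdsGT_zero (s.re - 1)) (by linarith)
  refine (hconv.mono_set (Set.Ioi_subset_Ioi zero_le_one)).congr_fun (fun t ht => ?_)
    measurableSet_Ioi
  simp only [fractIoi_of_lt ht, smul_eq_mul]

theorem norm_mellin_fractIoi_le (hs : s.re < 0) : ‖mellin fractIoi s‖ ≤ 1 / -s.re := by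
  rw [mellin_fractIoi_eq]
  calc _ ≤ ∫ t in Set.Ioi (1 : ℝ), t ^ (s.re - 1) := by
        refine norm_integral_le_of_norm_le (integrableOn_Ioi_rpow_of_lt (by linarith) one_pos) <|
          (ae_restrict_iff' measurableSet_Ioi).mpr (.of_forall fun t ht => ?_)
        have ht0 : (0 : ℝ) < t := one_pos.trans ht
        rw [norm_mul, norm_cpow_eq_rpow_re_of_pos ht0, sub_re, one_re, ← fractIoi_of_lt ht]
        exact mul_le_of_le_one_right (Real.rpow_nonneg ht0.le _) (norm_fractIoi_le_one t)
    _ = 1 / -s.re := by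
        rw [integral_Ioi_rpow_of_lt (by linarith) one_pos]
        simp [neg_div, div_neg]

end FractMellin

section ZetaBasics

variable {s z w : ℂ} {T : ℝ}

theorem riemannZeta_eq_integral_fract (hs : 1 < s.re) :
    riemannZeta s = s * (1 / (s - 1) - mellin fractIoi (-s)) := by
  have hneg : (-s).re < -1 := by simpa using hs
  have hzeta : riemannZeta s =
      s * ∫ t in Set.Ioi (1 : ℝ), (∑ _k ∈ Icc 1 ⌊t⌋₊, (1 : ℂ)) * t ^ (-(s + 1)) := by
    rw [← LSeries_one_eq_riemannZeta hs]
    exact LSeries_eq_mul_integral 1 (r := 1) zero_le_one hs (LSeriesSummable_one_iff.mpr hs)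
      (.of_bound 1 (.of_forall fun n => by simp))
  have hpow : ∫ t in Set.Ioi (1 : ℝ), (t : ℂ) ^ (-s) = 1 / (s - 1) := by
    rw [integral_Ioi_cpow_of_lt hneg one_pos, ofReal_one, one_cpow, neg_add_eq_sub,
      ← neg_sub s 1, neg_div_neg_eq]
  rw [hzeta, mellin_fractIoi_eq, ← hpow, ← integral_sub (integrableOn_Ioi_cpow_of_lt hneg one_pos)
    (integrableOn_cpow_mul_fract (by linarith))]
  congr 1
  refine setIntegral_congr_fun measurableSet_Ioi fun t ht => ?_
  have ht0 : (0 : ℝ) < t := one_pos.trans ht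
  have htc : (t : ℂ) ≠ 0 := by exact_mod_cast ht0.ne'
  have hfloor : (⌊t⌋₊ : ℂ) = t - ((Int.fract t : ℝ) : ℂ) := by
    rw [← ofReal_natCast, natCast_floor_eq_intCast_floor ht0.le, Int.fract]
    push_cast
    ring
  have hmul : (t : ℂ) ^ (-s) = (t : ℂ) ^ (-s - 1) * t := by
    rw [cpow_sub _ _ htc, cpow_one, div_mul_cancel₀ _ htc]
  simp only [sum_const, Nat.card_Icc, add_tsub_cancel_right, nsmul_eq_mul, mul_one]
  rw [hmul, hfloor, neg_add']
  ring

theorem riemannZeta₀_eq_mellin (hs : 0 < s.re) :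
    riemannZeta₀ s = 1 - s * mellin fractIoi (-s) := by
  have hopen : ∀ a : ℝ, IsOpen {s : ℂ | a < s.re} := fun _ =>
    isOpen_lt continuous_const continuous_re
  have hdiff : DifferentiableOn ℂ (fun s => 1 - s * mellin fractIoi (-s)) {s : ℂ | 0 < s.re} :=
    fun z hz => by
      have : DifferentiableAt ℂ (fun s => mellin fractIoi (-s)) z :=
        (differentiableAt_mellin_fractIoi (s := -z) (by simpa using hz)).comp z
          differentiableAt_id.neg
      exact ((differentiableAt_const _).sub
        (differentiableAt_id.mul this)).differentiableWithinAt
  refine (differentiable_riemannZeta₀.differentiableOn.analyticOnNhd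
    (hopen 0)).eqOn_of_preconnected_of_eventuallyEq (hdiff.analyticOnNhd (hopen 0))
    (convex_halfSpace_re_gt 0).isPreconnected (z₀ := 2) (by simp) ?_ hs
  filter_upwards [(hopen 1).mem_nhds (show 1 < (2 : ℂ).re by simp)] with z hz
  have hz1 : z ≠ 1 := fun h => by simp [h] at hz
  have := sub_ne_zero.mpr hz1
  have hadd := (riemannZeta_eq_inv_sub_add hz1).symm.trans (riemannZeta_eq_integral_fract hz)
  field_simp at hadd
  exact mul_left_cancel₀ this (by linear_combination hadd)

theorem norm_riemannZeta₀_le (hs : 0 < s.re) : ‖riemannZeta₀ s‖ ≤ 1 + ‖s‖ / s.re := by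
  rw [riemannZeta₀_eq_mellin hs, div_eq_mul_one_div]
  have := norm_mellin_fractIoi_le (s := -s) (by simpa using hs)
  rw [neg_re, neg_neg] at this
  calc _ ≤ ‖(1 : ℂ)‖ + ‖s * mellin fractIoi (-s)‖ := norm_sub_le _ _
    _ ≤ 1 + ‖s‖ * (1 / s.re) := by rw [norm_mul, norm_one]; gcongr

theorem riemannZeta₁_of_ne_one (hs : s ≠ 1) : riemannZeta₁ s = (s - 1) * riemannZeta s := by
  rw [riemannZeta_eq_inv_sub_mul hs, mul_inv_cancel_left₀ (sub_ne_zero.mpr hs)]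

theorem riemannZeta₁_ne_zero_of_one_le_re (hs : 1 ≤ s.re) : riemannZeta₁ s ≠ 0 := by
  rcases eq_or_ne s 1 with rfl | h
  · simp
  · rw [riemannZeta₁_of_ne_one h]
    exact mul_ne_zero (sub_ne_zero.mpr h) (riemannZeta_ne_zero_of_one_le_re hs)

theorem logDeriv_riemannZeta₁ (hs : s ≠ 1) (hz : riemannZeta s ≠ 0) :
    logDeriv riemannZeta₁ s = deriv riemannZeta s / riemannZeta s + 1 / (s - 1) := by
  have hs' := sub_ne_zero.mpr hs
  have hz₁ : riemannZeta₁ s ≠ 0 := riemannZeta₁_of_ne_one hs ▸ mul_ne_zero hs' hz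
  rw [logDeriv_apply, deriv_riemannZeta_eq_neg_inv_sub_sq_mul_add hs, riemannZeta_eq_inv_sub_mul hs]
  field_simp
  ring

theorem norm_inv_riemannZeta_le (hs : 1 < s.re) : ‖(riemannZeta s)⁻¹‖ ≤ ‖riemannZeta s.re‖ := by
  have hsum : Summable fun n : ℕ => 1 / (n : ℝ) ^ s.re := Real.summable_one_div_nat_rpow.mpr hs
  have hre : riemannZeta s.re = ((∑' n : ℕ, 1 / (n : ℝ) ^ s.re : ℝ) : ℂ) := by
    rw [zeta_eq_tsum_one_div_nat_cpow (by simpa using hs), ofReal_tsum]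
    refine tsum_congr fun n => ?_
    rw [ofReal_div, ofReal_one, ofReal_cpow n.cast_nonneg, ofReal_natCast]
  have hinv : (riemannZeta s)⁻¹ = LSeries (fun n => (ArithmeticFunction.moebius n : ℂ)) s := by
    refine inv_eq_of_mul_eq_one_right ?_
    rw [← LSeries_one_eq_riemannZeta hs]
    exact LSeries_one_mul_Lseries_moebius hs
  rw [hinv, hre, norm_real]
  refine (tsum_of_norm_bounded hsum.hasSum fun n => ?_).trans (le_abs_self _)
  rcases Nat.eq_zero_or_pos n with rfl | hn
  · simpa using Real.rpow_nonneg le_rfl _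
  · rw [LSeries.term_of_ne_zero hn.ne', norm_div, norm_natCast_cpow_of_pos hn, norm_intCast]
    gcongr
    exact_mod_cast ArithmeticFunction.abs_moebius_le_one

theorem le_norm_riemannZeta (hs : 1 < s.re) (hs2 : s.re ≤ 2) :
    (s.re - 1) / 3 ≤ ‖riemannZeta s‖ := by
  have hpos : 0 < s.re - 1 := by linarith
  have hne : (s.re : ℂ) ≠ 1 := by exact_mod_cast hs.ne'
  have hζ₀ : ‖riemannZeta₀ s.re‖ ≤ 2 := by
    refine (norm_riemannZeta₀_le (by rw [ofReal_re]; linarith)).trans_eq ?_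
    rw [norm_real, ofReal_re, Real.norm_of_nonneg (by linarith), div_self (by linarith)]
    norm_num
  have hupper : ‖riemannZeta s.re‖ ≤ 3 / (s.re - 1) := by
    calc _ ≤ ‖((s.re : ℂ) - 1)⁻¹‖ + ‖riemannZeta₀ s.re‖ :=
          riemannZeta_eq_inv_sub_add hne ▸ norm_add_le _ _
      _ ≤ (s.re - 1)⁻¹ + 2 := by
          gcongr
          rw [norm_inv, ← ofReal_one, ← ofReal_sub, norm_real, Real.norm_of_nonneg hpos.le]
      _ ≤ 3 / (s.re - 1) := by rw [le_div_iff₀ hpos]; field_simp; linarith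
  have hne0 := norm_pos_iff.mpr (riemannZeta_ne_zero_of_one_le_re hs.le)
  have hinv := (norm_inv_riemannZeta_le hs).trans hupper
  rw [norm_inv, inv_le_comm₀ hne0 (by positivity), inv_div] at hinv
  exact hinv

theorem le_norm_riemannZeta₁ (hw : 1 < w.re) (hw2 : w.re ≤ 2) :
    (w.re - 1) ^ 2 / 3 ≤ ‖riemannZeta₁ w‖ := by
  have hw1 : w ≠ 1 := fun h => by simp [h] at hw
  rw [riemannZeta₁_of_ne_one hw1, norm_mul, sq, mul_div_assoc]
  refine mul_le_mul ?_ (le_norm_riemannZeta hw hw2) (by linarith) (norm_nonneg _)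
  simpa using re_le_norm (w - 1)

theorem norm_riemannZeta₁_le_pow (hT : 10 ≤ T) (h₁ : 1 / 2 ≤ z.re) (h₂ : z.re ≤ 3)
    (h₃ : |z.im| ≤ 3 * T) : ‖riemannZeta₁ z‖ ≤ T ^ 4 := by
  have hz : ‖z‖ ≤ 4 * T := by
    have := norm_le_abs_re_add_abs_im z
    rw [abs_of_nonneg (by linarith : 0 ≤ z.re)] at this
    linarith
  have hz1 : ‖z - 1‖ ≤ 4 * T := by
    have := norm_le_abs_re_add_abs_im (z - 1)
    have : |z.re - 1| ≤ 2 := by rw [abs_le]; constructor <;> linarith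
    simp only [sub_re, one_re, sub_im, one_im, sub_zero] at *
    linarith
  have hζ₀ : ‖riemannZeta₀ z‖ ≤ 1 + 4 * T / (1 / 2) :=
    (norm_riemannZeta₀_le (by linarith)).trans (by gcongr)
  calc ‖riemannZeta₁ z‖ ≤ ‖(1 : ℂ)‖ + ‖(z - 1) * riemannZeta₀ z‖ := norm_add_le _ _
    _ ≤ 1 + 4 * T * (1 + 4 * T / (1 / 2)) := by rw [norm_mul, norm_one]; gcongr
    _ ≤ T ^ 2 * T ^ 2 := by nlinarith [mul_le_mul hT hT (by norm_num) (by linarith)]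
    _ = T ^ 4 := by ring

theorem norm_riemannZeta₁_le_exp_mul (hT : 10 ≤ T) (hw : 1 + 1 / T ≤ w.re) (hw2 : w.re ≤ 2)
    (h₁ : 1 / 2 ≤ z.re) (h₂ : z.re ≤ 3) (h₃ : |z.im| ≤ 3 * T) :
    ‖riemannZeta₁ z‖ ≤ Real.exp (7 * Real.log T) * ‖riemannZeta₁ w‖ := by
  have hT0 : 0 < T := by linarith
  have hTinv : 0 < 1 / T := by positivity
  have hexp : Real.exp (7 * Real.log T) = T ^ 7 := by
    rw [mul_comm, ← Real.rpow_def_of_pos hT0]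
    norm_cast
  have hlower : (1 / T) ^ 2 / 3 ≤ ‖riemannZeta₁ w‖ :=
    le_trans (by gcongr; linarith) (le_norm_riemannZeta₁ (by linarith) hw2)
  calc ‖riemannZeta₁ z‖ ≤ T ^ 4 := norm_riemannZeta₁_le_pow hT h₁ h₂ h₃
    _ ≤ T ^ 4 * (T / 3) := le_mul_of_one_le_right (by positivity) (by linarith)
    _ = T ^ 7 * ((1 / T) ^ 2 / 3) := by field_simp
    _ ≤ _ := by rw [hexp]; gcongr

end ZetaBasics

section ZeroFreeRegion

variable {σ t u β T : ℝ}

theorem three_add_four_mul_re_add_re_sq_nonneg {z : ℂ} (hz : ‖z‖ = 1) :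
    0 ≤ 3 + 4 * z.re + (z ^ 2).re := by
  have hsq : z.re * z.re + z.im * z.im = 1 := by
    rw [← normSq_apply, normSq_eq_norm_sq, hz, one_pow]
  rw [sq, mul_re]
  nlinarith [sq_nonneg (1 + z.re)]

theorem three_four_one_neg_logDeriv_riemannZeta (hσ : 1 < σ) (t : ℝ) :
    0 ≤ 3 * (-(deriv riemannZeta σ / riemannZeta σ)).re
      + 4 * (-(deriv riemannZeta (σ + t * I) / riemannZeta (σ + t * I))).re
      + (-(deriv riemannZeta (σ + (2 * t : ℝ) * I) / riemannZeta (σ + (2 * t : ℝ) * I))).re := by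
  have hsum : ∀ u : ℝ, HasSum
      (fun n => (LSeries.term (fun n => (ArithmeticFunction.vonMangoldt n : ℂ)) (σ + u * I) n).re)
      (-(deriv riemannZeta (σ + u * I) / riemannZeta (σ + u * I))).re := fun u => by
    have hre : 1 < ((σ : ℂ) + u * I).re := by simpa using hσ
    rw [← neg_div, ← ArithmeticFunction.LSeries_vonMangoldt_eq_deriv_riemannZeta_div hre]
    exact hasSum_re (ArithmeticFunction.LSeriesSummable_vonMangoldt hre).LSeriesHasSum
  have h0 := hsum 0
  simp only [ofReal_zero, zero_mul, add_zero] at h0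
  refine (((h0.mul_left 3).add ((hsum t).mul_left 4)).add (hsum (2 * t))).nonneg fun n => ?_
  rcases Nat.eq_zero_or_pos n with rfl | hn
  · simp
  have hnc : (n : ℂ) ≠ 0 := by exact_mod_cast hn.ne'
  have hnorm : ‖(n : ℂ) ^ (-(t * I))‖ = 1 := by simp [norm_natCast_cpow_of_pos hn]
  have hterm : ∀ u : ℝ, LSeries.term (fun n => (ArithmeticFunction.vonMangoldt n : ℂ))
      (σ + u * I) n = ((ArithmeticFunction.vonMangoldt n / (n : ℝ) ^ σ : ℝ) : ℂ) *
        (n : ℂ) ^ (-(u * I)) := fun u => by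
    rw [LSeries.term_of_ne_zero hn.ne', cpow_add _ _ hnc, ofReal_div,
      ofReal_cpow n.cast_nonneg, ofReal_natCast, cpow_neg, ← div_eq_mul_inv, div_div]
  have h2t : (n : ℂ) ^ (-((2 * t : ℝ) * I)) = ((n : ℂ) ^ (-(t * I))) ^ 2 := by
    rw [← cpow_nat_mul]
    push_cast
    ring_nf
  have hterm0 := hterm 0
  simp only [ofReal_zero, zero_mul, add_zero, neg_zero, cpow_zero, mul_one] at hterm0
  rw [hterm0, hterm, hterm, h2t, re_ofReal_mul, re_ofReal_mul, ofReal_re]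
  have hnonneg : 0 ≤ ArithmeticFunction.vonMangoldt n / (n : ℝ) ^ σ :=
    div_nonneg ArithmeticFunction.vonMangoldt_nonneg (Real.rpow_nonneg n.cast_nonneg _)
  linarith [mul_nonneg hnonneg (three_add_four_mul_re_add_re_sq_nonneg hnorm)]

theorem re_lt_one_of_riemannZeta₁_eq_zero {s : ℂ} (h : riemannZeta₁ s = 0) : s.re < 1 :=
  not_le.mp fun hs => riemannZeta₁_ne_zero_of_one_le_re hs h

theorem norm_riemannZeta₁_le_of_mem_closedBall (hT : 10 ≤ T) (hσ : 1 + 1 / T ≤ σ)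
    (hσ2 : σ ≤ 1 + 1 / 100) (hu : |u| ≤ 2 * T) :
    ∀ z ∈ closedBall (σ + u * I : ℂ) (1 / 2),
      ‖riemannZeta₁ z‖ ≤ Real.exp (7 * Real.log T) * ‖riemannZeta₁ (σ + u * I)‖ := fun z hz => by
  rw [mem_closedBall_iff_norm] at hz
  have hre := abs_le.mp ((abs_re_le_norm _).trans hz)
  have him := abs_le.mp ((abs_im_le_norm _).trans hz)
  have hTinv : 0 < 1 / T := by positivity
  rw [abs_le] at hu
  simp only [sub_re, add_re, ofReal_re, re_ofReal_mul, I_re, mul_zero, add_zero] at hre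
  simp only [sub_im, add_im, ofReal_im, im_ofReal_mul, I_im, mul_one, zero_add] at him
  refine norm_riemannZeta₁_le_exp_mul hT (by simpa using hσ) ?_ ?_ ?_ (abs_le.mpr ⟨?_, ?_⟩)
  · simp only [add_re, ofReal_re, re_ofReal_mul, I_re, mul_zero, add_zero]
    linarith
  all_goals linarith

theorem neg_re_logDeriv_riemannZeta₁_le (hT : 10 ≤ T) (hσ : 1 + 1 / T ≤ σ)
    (hσ2 : σ ≤ 1 + 1 / 100) (hu : |u| ≤ 2 * T) :
    -(logDeriv riemannZeta₁ (σ + u * I)).re ≤ 240 * (7 * Real.log T + Real.log 2) := by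
  have hre : 1 < ((σ : ℂ) + u * I).re := by
    have : 0 < 1 / T := by positivity
    simp only [add_re, ofReal_re, re_ofReal_mul, I_re, mul_zero, add_zero]
    linarith
  refine (neg_re_logDeriv_le one_half_pos differentiable_riemannZeta₁.diffContOnCl
    (riemannZeta₁_ne_zero_of_one_le_re hre.le)
    (fun z _ hz => ((re_lt_one_of_riemannZeta₁_eq_zero hz).trans hre).le)
    (norm_riemannZeta₁_le_of_mem_closedBall hT hσ hσ2 hu)).trans_eq (by ring)

theorem neg_re_logDeriv_riemannZeta₁_le_of_zero (hT : 10 ≤ T) (hσ : 1 + 1 / T ≤ σ)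
    (hσ2 : σ ≤ 1 + 1 / 100) (hu : |u| ≤ 2 * T) (hβ : riemannZeta₁ (β + u * I) = 0)
    (hβσ : σ - β < 1 / 2) :
    -(logDeriv riemannZeta₁ (σ + u * I)).re ≤
      240 * (7 * Real.log T + Real.log 2) + 2 - 1 / (σ - β) := by
  have hTinv : 0 < 1 / T := by positivity
  have hre : 1 < ((σ : ℂ) + u * I).re := by
    simp only [add_re, ofReal_re, re_ofReal_mul, I_re, mul_zero, add_zero]
    linarith
  have hβ1 : β < 1 := by simpa using re_lt_one_of_riemannZeta₁_eq_zero hβ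
  have hsub : (β + u * I : ℂ) - (σ + u * I) = ((-(σ - β) : ℝ) : ℂ) := by push_cast; ring
  have hle := neg_re_logDeriv_le_of_zero (R := 1 / 2) differentiable_riemannZeta₁.diffContOnCl
    (riemannZeta₁_ne_zero_of_one_le_re hre.le)
    (fun z _ hz => ((re_lt_one_of_riemannZeta₁_eq_zero hz).trans hre).le)
    (norm_riemannZeta₁_le_of_mem_closedBall hT hσ hσ2 hu) hβ
    (by rw [mem_ball_iff_norm, hsub, norm_real, norm_neg, Real.norm_of_nonneg] <;> linarith)
  have hreal : ((starRingEnd ℂ) ((-(σ - β) : ℝ) : ℂ) / (((1 / 2 : ℝ)) : ℂ) ^ 2 -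
      1 / ((-(σ - β) : ℝ) : ℂ)).re = 1 / (σ - β) - 4 * (σ - β) := by
    rw [conj_ofReal, ← ofReal_pow, ← ofReal_div, ← ofReal_one, ← ofReal_div, ← ofReal_sub,
      ofReal_re, one_div_neg_eq_neg_one_div]
    ring
  rw [hsub, hreal] at hle
  linarith

theorem three_four_one_logDeriv_riemannZeta₁ (hσ : 1 < σ) (ht : 1 ≤ |t|) :
    0 ≤ 3 * (1 / (σ - 1) - (logDeriv riemannZeta₁ σ).re)
      + 4 * (1 - (logDeriv riemannZeta₁ (σ + t * I)).re)
      + (1 - (logDeriv riemannZeta₁ (σ + (2 * t : ℝ) * I)).re) := by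
  have hlog : ∀ u : ℝ, (-(deriv riemannZeta (σ + u * I) / riemannZeta (σ + u * I))).re =
      (1 / (σ + u * I - 1 : ℂ)).re - (logDeriv riemannZeta₁ (σ + u * I)).re := fun u => by
    have hne : (σ + u * I : ℂ) ≠ 1 := fun h => by simpa [hσ.ne'] using congrArg re h
    rw [logDeriv_riemannZeta₁ hne (riemannZeta_ne_zero_of_one_le_re (by simpa using hσ.le)),
      add_re, neg_re]
    ring
  have hfar : ∀ u : ℝ, 1 ≤ |u| → (1 / (σ + u * I - 1 : ℂ)).re ≤ 1 := fun u hu => by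
    refine (re_le_norm _).trans ?_
    have him : 1 ≤ ‖(σ + u * I - 1 : ℂ)‖ :=
      hu.trans (by simpa using abs_im_le_norm (σ + u * I - 1 : ℂ))
    rw [norm_div, norm_one]
    exact div_le_one_of_le₀ him (norm_nonneg _)
  have h0 := hlog 0
  have hpole : (1 / (σ - 1 : ℂ)).re = 1 / (σ - 1) := by
    rw [← ofReal_one, ← ofReal_sub, ← ofReal_div, ofReal_re]
  simp only [ofReal_zero, zero_mul, add_zero, hpole] at h0
  have h341 := three_four_one_neg_logDeriv_riemannZeta hσ t
  rw [h0, hlog, hlog] at h341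
  have h2t : 1 ≤ |2 * t| := by rw [abs_mul, abs_two]; linarith
  linarith [hfar t ht, hfar _ h2t]

theorem re_le_of_riemannZeta₁_eq_zero (hT : 10 ≤ T) (hTlog : 34000 * Real.log T ≤ T)
    (hlogT : 1 ≤ Real.log T) (ht1 : 1 ≤ |t|) (htT : |t| ≤ T) (h0 : riemannZeta₁ (β + t * I) = 0) :
    β ≤ 1 - 1 / (238000 * Real.log T) := by
  set L := Real.log T
  obtain ⟨η, hη⟩ : ∃ η, η = 1 / (34000 * L) := ⟨_, rfl⟩
  have hη0 : 0 < η := by rw [hη]; positivity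
  -- `17000 L` exceeds the error terms below, which add up to `8 * 240 * (7 L + log 2) + 13`.
  have hηL : 17000 * L * η = 1 / 2 := by rw [hη]; field_simp; norm_num
  have hηT : 1 + 1 / T ≤ 1 + η := by rw [hη]; gcongr
  have hη1 : η ≤ 1 / 100 := by rw [hη]; gcongr; linarith
  have hβ1 : β < 1 := by simpa using re_lt_one_of_riemannZeta₁_eq_zero h0
  have hgoal : 1 / (238000 * L) = η / 7 := by rw [hη]; field_simp; norm_num
  rw [hgoal]
  by_contra! hβ
  have h341 := three_four_one_logDeriv_riemannZeta₁ (σ := 1 + η) (by linarith) ht1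
  have hzero := neg_re_logDeriv_riemannZeta₁_le (u := 0) hT hηT (by linarith)
    (by rw [abs_zero]; linarith)
  have ht := neg_re_logDeriv_riemannZeta₁_le_of_zero hT hηT (by linarith) (by linarith) h0
    (by linarith)
  have h2t := neg_re_logDeriv_riemannZeta₁_le (u := 2 * t) hT hηT (by linarith)
    (by rw [abs_mul, abs_two]; linarith)
  rw [ofReal_zero, zero_mul, add_zero] at hzero
  rw [add_sub_cancel_left] at h341
  have hlog2 : Real.log 2 < 1 := Real.log_two_lt_d9.trans (by norm_num)
  have hle : 4 / (1 + η - β) ≤ (7 / 2) / η := by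
    calc 4 / (1 + η - β) = 4 * (1 / (1 + η - β)) := by ring
      _ ≤ 3 * (1 / η) + 17000 * L := by linarith
      _ = (7 / 2) / η := by field_simp; linear_combination 2 * hηL
  rw [div_le_div_iff₀ (by linarith) hη0] at hle
  linarith

theorem exists_forall_abs_im_le_one_riemannZeta₁_ne_zero :
    ∃ δ > (0 : ℝ), ∀ s : ℂ, |s.im| ≤ 1 → 1 - δ < s.re → riemannZeta₁ s ≠ 0 := by
  have hK : IsCompact ({1} ×ℂ Set.Icc (-1) 1) := isCompact_singleton.reProdIm isCompact_Icc
  obtain ⟨δ, hδ, hsub⟩ := hK.exists_thickening_subset_open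
    (isOpen_ne_fun differentiable_riemannZeta₁.continuous continuous_const)
    fun s hs => riemannZeta₁_ne_zero_of_one_le_re (Eq.ge hs.1)
  refine ⟨δ, hδ, fun s him hre => ?_⟩
  rcases le_or_gt 1 s.re with h | h
  · exact riemannZeta₁_ne_zero_of_one_le_re h
  · refine hsub (mem_thickening_iff.mpr ⟨⟨1, s.im⟩, ⟨rfl, abs_le.mp him⟩, ?_⟩)
    rw [dist_of_im_eq (show s.im = (⟨1, s.im⟩ : ℂ).im from rfl), Real.dist_eq, abs_lt]
    constructor <;> linarith

theorem eventually_mul_log_le (A : ℝ) : ∀ᶠ T : ℝ in atTop, A * Real.log T ≤ T := by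
  filter_upwards [(Real.isLittleO_log_id_atTop.const_mul_left A).bound one_pos,
    eventually_ge_atTop 0] with T hT hT0
  rw [one_mul, id, Real.norm_of_nonneg hT0] at hT
  exact (le_abs_self _).trans hT

theorem exists_zeroFreeRegion : ∃ c > (0 : ℝ), ∀ᶠ T in atTop, ∀ s : ℂ, |s.im| ≤ T →
    1 - c / Real.log T < s.re → riemannZeta₁ s ≠ 0 := by
  obtain ⟨δ, hδ, hlow⟩ := exists_forall_abs_im_le_one_riemannZeta₁_ne_zero
  refine ⟨min δ (1 / 238000), by positivity, ?_⟩
  filter_upwards [eventually_ge_atTop 10, eventually_mul_log_le 34000,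
    Real.tendsto_log_atTop.eventually_ge_atTop 1] with T hT hTlog hlogT s him hre h0
  rcases le_or_gt |s.im| 1 with h | h
  · refine hlow s h (lt_of_le_of_lt ?_ hre) h0
    have : min δ (1 / 238000) / Real.log T ≤ δ :=
      (div_le_self (by positivity) hlogT).trans (min_le_left _ _)
    linarith
  · have hβ := re_le_of_riemannZeta₁_eq_zero (β := s.re) hT hTlog hlogT h.le him
      (by rwa [re_add_im])
    have : min δ (1 / 238000) / Real.log T ≤ 1 / (238000 * Real.log T) := by
      rw [← div_div]
      gcongr
      exact min_le_right _ _
    linarith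

end ZeroFreeRegion

section LogBox

/-- The rectangle `|Im s| ≤ T`, `|Re s - 1| ≤ c / log T`, inside the classical zero-free region
for `T` large and `c` small. -/
def logBox (c T : ℝ) : Set ℂ := {s | |s.im| ≤ T ∧ |s.re - 1| ≤ c / Real.log T}

/-- `f` is holomorphic and bounded by a power of `log T` on the rectangles `logBox c T`, for some
fixed `c` and all large `T`: the bound for `f` near the line `Re s = 1` which makes a contour shift
into the classical zero-free region possible. A constant factor in the bound would be absorbed by a
larger exponent. -/
def LogBoxBounded (f : ℂ → ℂ) : Prop :=
  ∃ c > (0 : ℝ), ∃ p : ℕ, ∀ᶠ T in atTop, DifferentiableOn ℂ f (logBox c T) ∧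
    ∀ s ∈ logBox c T, ‖f s‖ ≤ Real.log T ^ p

variable {c c' T : ℝ} {f g : ℂ → ℂ}

theorem logBox_subset_logBox (hc : c ≤ c') (hT : 1 ≤ T) : logBox c T ⊆ logBox c' T := by
  intro s ⟨him, hre⟩
  have := Real.log_nonneg hT
  exact ⟨him, hre.trans (by gcongr)⟩

theorem logBox_mem_nhds_one (hc : 0 < c) (hT : 1 < T) : logBox c T ∈ 𝓝 1 := by
  have hlog : 0 < c / Real.log T := div_pos hc (Real.log_pos hT)
  filter_upwards [ball_mem_nhds (1 : ℂ) (lt_min (one_pos.trans hT) hlog)] with s hs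
  rw [mem_ball_iff_norm, lt_min_iff] at hs
  constructor
  · simpa using (abs_im_le_norm (s - 1)).trans hs.1.le
  · simpa using (abs_re_le_norm (s - 1)).trans hs.2.le

theorem log_two_mul_le_two_mul_log (hT : 2 ≤ T) : Real.log (2 * T) ≤ 2 * Real.log T := by
  rw [Real.log_mul (by norm_num) (by linarith), two_mul]
  gcongr

theorem closedBall_subset_logBox_two_mul (hc : c ≤ 1) (hlog : 1 ≤ Real.log T) (hT : 2 ≤ T)
    {s : ℂ} (hs : s ∈ logBox (c / 4) T) :
    closedBall s (c / 4 / Real.log T) ⊆ logBox c (2 * T) := by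
  intro z hz
  obtain ⟨him, hre⟩ := hs
  rw [mem_closedBall_iff_norm] at hz
  have hzre := (abs_re_le_norm _).trans hz
  have hzim := (abs_im_le_norm _).trans hz
  have hr : c / 4 / Real.log T ≤ 1 := by
    rw [div_le_one (by linarith)]
    linarith
  have hc0 : 0 ≤ c := by
    by_contra! hc0
    have : c / 4 / Real.log T < 0 := div_neg_of_neg_of_pos (by linarith) (by linarith)
    linarith [abs_nonneg (s.re - 1)]
  have hr2 : 2 * (c / 4 / Real.log T) ≤ c / Real.log (2 * T) := by
    calc 2 * (c / 4 / Real.log T) = c / (2 * Real.log T) := by field_simp; ring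
      _ ≤ c / Real.log (2 * T) := by
        gcongr
        · exact Real.log_pos (by linarith)
        · exact log_two_mul_le_two_mul_log hT
  rw [sub_re, abs_le] at hzre
  rw [sub_im, abs_le] at hzim
  rw [abs_le] at him hre
  exact ⟨abs_le.mpr ⟨by linarith, by linarith⟩, abs_le.mpr ⟨by linarith, by linarith⟩⟩

theorem LogBoxBounded.of_bound {c K : ℝ} {p : ℕ} (hc : 0 < c)
    (h : ∀ᶠ T in atTop, DifferentiableOn ℂ f (logBox c T) ∧
      ∀ s ∈ logBox c T, ‖f s‖ ≤ K * Real.log T ^ p) : LogBoxBounded f := by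
  refine ⟨c, hc, p + 1, ?_⟩
  filter_upwards [h, Real.tendsto_log_atTop.eventually_ge_atTop (max K 1)] with T hT hlog
  have : 0 ≤ Real.log T := by linarith [le_max_right K 1]
  refine ⟨hT.1, fun s hs => (hT.2 s hs).trans ?_⟩
  rw [pow_succ']
  gcongr
  exact (le_max_left _ _).trans hlog

theorem LogBoxBounded.exists_le_one (hf : LogBoxBounded f) :
    ∃ c > (0 : ℝ), c ≤ 1 ∧ ∃ p : ℕ, ∀ᶠ T in atTop, DifferentiableOn ℂ f (logBox c T) ∧
      ∀ s ∈ logBox c T, ‖f s‖ ≤ Real.log T ^ p := by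
  obtain ⟨c, hc, p, h⟩ := hf
  refine ⟨min c 1, by positivity, min_le_right _ _, p, ?_⟩
  filter_upwards [h, eventually_ge_atTop 1] with T hT hT1
  have hsub := logBox_subset_logBox (min_le_left c 1) hT1
  exact ⟨hT.1.mono hsub, fun s hs => hT.2 s (hsub hs)⟩

theorem LogBoxBounded.exists_common (hf : LogBoxBounded f) (hg : LogBoxBounded g) :
    ∃ c > (0 : ℝ), ∃ p : ℕ, ∀ᶠ T in atTop,
      (DifferentiableOn ℂ f (logBox c T) ∧ DifferentiableOn ℂ g (logBox c T)) ∧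
        ∀ s ∈ logBox c T, ‖f s‖ ≤ Real.log T ^ p ∧ ‖g s‖ ≤ Real.log T ^ p := by
  obtain ⟨c, hc, p, hf⟩ := hf
  obtain ⟨d, hd, q, hg⟩ := hg
  refine ⟨min c d, by positivity, max p q, ?_⟩
  filter_upwards [hf, hg, eventually_ge_atTop 1,
    Real.tendsto_log_atTop.eventually_ge_atTop 1] with T hf hg hT hlog
  have hsubc := logBox_subset_logBox (min_le_left c d) hT
  have hsubd := logBox_subset_logBox (min_le_right c d) hT
  exact ⟨⟨hf.1.mono hsubc, hg.1.mono hsubd⟩, fun s hs =>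
    ⟨(hf.2 s (hsubc hs)).trans (pow_le_pow_right₀ hlog (le_max_left _ _)),
      (hg.2 s (hsubd hs)).trans (pow_le_pow_right₀ hlog (le_max_right _ _))⟩⟩

theorem LogBoxBounded.add (hf : LogBoxBounded f) (hg : LogBoxBounded g) :
    LogBoxBounded (f + g) := by
  obtain ⟨c, hc, p, h⟩ := hf.exists_common hg
  refine .of_bound (K := 2) (p := p) hc ?_
  filter_upwards [h] with T ⟨⟨hf, hg⟩, hb⟩
  refine ⟨hf.add hg, fun s hs => (norm_add_le _ _).trans ?_⟩
  linarith [hb s hs]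

theorem LogBoxBounded.mul (hf : LogBoxBounded f) (hg : LogBoxBounded g) :
    LogBoxBounded (f * g) := by
  obtain ⟨c, hc, p, h⟩ := hf.exists_common hg
  refine ⟨c, hc, p + p, ?_⟩
  filter_upwards [h, Real.tendsto_log_atTop.eventually_ge_atTop 0] with T ⟨⟨hf, hg⟩, hb⟩ hlog
  refine ⟨hf.mul hg, fun s hs => ?_⟩
  rw [Pi.mul_apply, norm_mul, pow_add]
  gcongr
  exacts [(hb s hs).1, (hb s hs).2]

theorem LogBoxBounded.const_mul (a : ℂ) (hf : LogBoxBounded f) :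
    LogBoxBounded fun s => a * f s := by
  obtain ⟨c, hc, p, h⟩ := hf
  refine .of_bound (K := ‖a‖) (p := p) hc ?_
  filter_upwards [h] with T ⟨hf, hb⟩
  refine ⟨hf.const_mul a, fun s hs => ?_⟩
  rw [norm_mul]
  gcongr
  exact hb s hs

theorem LogBoxBounded.analyticAt_one (hf : LogBoxBounded f) : AnalyticAt ℂ f 1 := by
  obtain ⟨c, hc, p, h⟩ := hf
  obtain ⟨T, hT, hT1⟩ := (h.and (eventually_gt_atTop 1)).exists
  exact hT.1.analyticAt (logBox_mem_nhds_one hc hT1)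

theorem LogBoxBounded.deriv (hf : LogBoxBounded f) : LogBoxBounded (deriv f) := by
  obtain ⟨c, hc, hc1, p, h⟩ := hf.exists_le_one
  refine .of_bound (c := c / 4) (K := 2 ^ p * (4 / c)) (p := p + 1) (by positivity) ?_
  filter_upwards [(tendsto_id.const_mul_atTop two_pos).eventually h, eventually_ge_atTop 2,
    Real.tendsto_log_atTop.eventually_ge_atTop 1] with T ⟨hd, hb⟩ hT hlog
  rw [id] at hd hb
  have hr : 0 < c / 4 / Real.log T := by positivity
  have hball {s : ℂ} (hs : s ∈ logBox (c / 4) T) :=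
    closedBall_subset_logBox_two_mul hc1 hlog hT hs
  refine ⟨fun s hs => ?_, fun s hs => ?_⟩
  · exact ((hd.mono (hball hs)).analyticAt
      (closedBall_mem_nhds s hr)).deriv.differentiableAt.differentiableWithinAt
  · have hcl : DiffContOnCl ℂ f (ball s (c / 4 / Real.log T)) :=
      (hd.mono ((closure_ball _ hr.ne').subset.trans (hball hs))).diffContOnCl
    calc ‖_root_.deriv f s‖ ≤ Real.log (2 * T) ^ p / (c / 4 / Real.log T) :=
          norm_deriv_le_of_forall_mem_sphere_norm_le hr hcl
            fun z hz => hb z (hball hs (sphere_subset_closedBall hz))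
      _ ≤ (2 * Real.log T) ^ p / (c / 4 / Real.log T) := by
          gcongr
          · exact Real.log_nonneg (by linarith)
          · exact log_two_mul_le_two_mul_log hT
      _ = 2 ^ p * (4 / c) * Real.log T ^ (p + 1) := by
          rw [mul_pow, pow_succ]
          field_simp

theorem LogBoxBounded.iteratedDeriv (hf : LogBoxBounded f) (n : ℕ) :
    LogBoxBounded (iteratedDeriv n f) := by
  induction n with
  | zero => simpa only [iteratedDeriv_zero] using hf
  | succ n ih => simpa only [iteratedDeriv_succ] using ih.deriv

theorem exists_norm_dslope_le {a : ℂ} (hf : DifferentiableAt ℂ f a) :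
    ∃ K, ∀ s, ‖dslope f a s‖ ≤ K * (1 + ‖f s‖) := by
  obtain ⟨ε, hε, hball⟩ := Metric.eventually_nhds_iff.mp
    ((continuousAt_dslope_same.mpr hf).norm.eventually_lt continuousAt_const
      (lt_add_one ‖dslope f a a‖))
  have hD : 0 ≤ ‖dslope f a a‖ + 1 := by positivity
  refine ⟨‖dslope f a a‖ + 1 + (1 + ‖f a‖) / ε, fun s => ?_⟩
  rcases lt_or_ge (dist s a) ε with hs | hs
  · have h1 : (1 : ℝ) ≤ 1 + ‖f s‖ := by linarith [norm_nonneg (f s)]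
    have h2 : 0 ≤ (1 + ‖f a‖) / ε := by positivity
    nlinarith [hball hs]
  · have hsa : s ≠ a := by
      rintro rfl
      linarith [dist_self s]
    rw [dslope_of_ne _ hsa, slope_def_module, norm_smul, norm_inv, ← dist_eq_norm]
    calc (dist s a)⁻¹ * ‖f s - f a‖ ≤ ε⁻¹ * ((1 + ‖f a‖) * (1 + ‖f s‖)) := by
          gcongr
          nlinarith [norm_sub_le (f s) (f a), norm_nonneg (f s), norm_nonneg (f a)]
      _ = (1 + ‖f a‖) / ε * (1 + ‖f s‖) := by ring
      _ ≤ _ := by gcongr; linarith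

theorem LogBoxBounded.dslope_one (hf : LogBoxBounded f) : LogBoxBounded (dslope f 1) := by
  obtain ⟨K, hK⟩ := exists_norm_dslope_le hf.analyticAt_one.differentiableAt
  obtain ⟨c, hc, p, h⟩ := hf
  refine .of_bound (K := |K| * 2) (p := p) hc ?_
  filter_upwards [h, eventually_gt_atTop 1,
    Real.tendsto_log_atTop.eventually_ge_atTop 1] with T ⟨hd, hb⟩ hT hlog
  refine ⟨(differentiableOn_dslope (logBox_mem_nhds_one hc hT)).mpr hd, fun s hs => ?_⟩
  calc ‖dslope f 1 s‖ ≤ |K| * (1 + ‖f s‖) := (hK s).trans (by gcongr; exact le_abs_self K)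
    _ ≤ |K| * (Real.log T ^ p + Real.log T ^ p) := by
        gcongr
        exacts [one_le_pow₀ hlog, hb s hs]
    _ = |K| * 2 * Real.log T ^ p := by ring

end LogBox

section ZetaLogBox

variable {c T : ℝ} {s : ℂ}

theorem norm_logDeriv_riemannZeta₁_le (hc : 0 < c) (hc1 : c ≤ 1) (hT : 10 ≤ T)
    (hcT : 4 / c * Real.log T ≤ T) (hlog : 1 ≤ Real.log T)
    (hne : ∀ s : ℂ, |s.im| ≤ T → 1 - c / Real.log T < s.re → riemannZeta₁ s ≠ 0)
    (him : |s.im| ≤ T / 2) (hre : |s.re - 1| ≤ c / (4 * Real.log T)) :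
    riemannZeta₁ s ≠ 0 ∧ ‖logDeriv riemannZeta₁ s‖ ≤ 560 / c * Real.log T ^ 2 := by
  set L := Real.log T
  obtain ⟨η, hη⟩ : ∃ η, η = c / (4 * L) := ⟨_, rfl⟩
  have hη0 : 0 < η := by rw [hη]; positivity
  have hη1 : η ≤ 1 / 4 := by
    rw [hη, div_le_iff₀ (by positivity)]
    linarith
  have hηT : 1 / T ≤ η := by
    rw [hη, div_le_div_iff₀ (by linarith) (by positivity)]
    rw [div_mul_eq_mul_div, div_le_iff₀ hc] at hcT
    linarith
  have hηc : 4 * η = c / L := by rw [hη]; field_simp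
  rw [← hη] at hre
  obtain ⟨w, hwre, hwim⟩ : ∃ w : ℂ, w.re = 1 + η ∧ w.im = s.im := ⟨⟨1 + η, s.im⟩, rfl, rfl⟩
  have hball : ∀ z ∈ ball w (3 * η), 1 - 2 * η < z.re ∧ z.re ≤ 3 ∧ |z.im| ≤ T := by
    intro z hz
    rw [mem_ball_iff_norm] at hz
    have hzre := (abs_re_le_norm _).trans_lt hz
    have hzim := (abs_im_le_norm _).trans_lt hz
    rw [sub_re, hwre, abs_lt] at hzre
    rw [sub_im, hwim, abs_lt] at hzim
    rw [abs_le] at him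
    exact ⟨by linarith, by linarith, abs_le.mpr ⟨by linarith, by linarith⟩⟩
  have hne_ball : ∀ z ∈ ball w (3 * η), riemannZeta₁ z ≠ 0 := fun z hz =>
    hne z (hball z hz).2.2 (by linarith [(hball z hz).1])
  have hsw : ‖s - w‖ ≤ 2 / 3 * (3 * η) := by
    rw [← dist_eq_norm, dist_of_im_eq hwim.symm, Real.dist_eq, hwre]
    rw [abs_le] at hre ⊢
    constructor <;> linarith
  refine ⟨hne_ball s (mem_ball_iff_norm.mpr (by linarith)), ?_⟩
  calc ‖logDeriv riemannZeta₁ s‖ ≤ 60 * (7 * L) / (3 * η) :=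
        norm_logDeriv_le_of_forall_ne_zero (by positivity) (by positivity)
          differentiable_riemannZeta₁.differentiableOn hne_ball
          (fun z hz => norm_riemannZeta₁_le_exp_mul hT (by linarith) (by linarith)
            (by linarith [(hball z hz).1]) (hball z hz).2.1 (by linarith [(hball z hz).2.2])) hsw
    _ = 560 / c * L ^ 2 := by rw [hη]; field_simp; norm_num

theorem logBoxBounded_logDeriv_riemannZeta₁ : LogBoxBounded (logDeriv riemannZeta₁) := by
  obtain ⟨c₀, hc₀, h⟩ := exists_zeroFreeRegion
  obtain ⟨c, hc, hcc₀, hc1⟩ : ∃ c > 0, c ≤ c₀ ∧ c ≤ 1 :=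
    ⟨min c₀ 1, by positivity, min_le_left _ _, min_le_right _ _⟩
  refine .of_bound (c := c / 8) (K := 2240 / c) (p := 2) (by positivity) ?_
  have htwo : Tendsto (fun T : ℝ => 2 * T) atTop atTop := tendsto_id.const_mul_atTop two_pos
  filter_upwards [htwo.eventually h, eventually_ge_atTop 5,
    htwo.eventually (eventually_mul_log_le (4 / c)),
    (Real.tendsto_log_atTop.comp htwo).eventually_ge_atTop 1] with T hne hT hcT hlog
  rw [Function.comp_apply] at hlog
  have hlog2 := log_two_mul_le_two_mul_log (T := T) (by linarith)
  have hmain {s : ℂ} (hs : s ∈ logBox (c / 8) T) : riemannZeta₁ s ≠ 0 ∧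
      ‖logDeriv riemannZeta₁ s‖ ≤ 560 / c * Real.log (2 * T) ^ 2 := by
    refine norm_logDeriv_riemannZeta₁_le hc hc1 (by linarith) hcT hlog
      (fun z him hre => hne z him (lt_of_le_of_lt ?_ hre)) (by linarith [hs.1]) (hs.2.trans ?_)
    · gcongr
    · rw [div_div]
      exact div_le_div_of_nonneg_left hc.le (by positivity) (by linarith)
  refine ⟨fun s hs => ?_, fun s hs => (hmain hs).2.trans ?_⟩
  · exact (differentiable_riemannZeta₁.analyticAt s).deriv.differentiableAt.div
      (differentiable_riemannZeta₁ s) (hmain hs).1 |>.differentiableWithinAt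
  · calc 560 / c * Real.log (2 * T) ^ 2 ≤ 560 / c * (2 * Real.log T) ^ 2 := by gcongr
      _ = 2240 / c * Real.log T ^ 2 := by ring

theorem logBoxBounded_mellin_fractIoi_neg : LogBoxBounded fun s => mellin fractIoi (-s) := by
  refine .of_bound (c := 1 / 2) (K := 2) (p := 0) (by norm_num) ?_
  filter_upwards [Real.tendsto_log_atTop.eventually_ge_atTop 1] with T hlog
  have hre {s : ℂ} (hs : s ∈ logBox (1 / 2) T) : 1 / 2 ≤ s.re := by
    have : 1 / 2 / Real.log T ≤ 1 / 2 := div_le_self (by norm_num) hlog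
    linarith [(abs_le.mp hs.2).1]
  refine ⟨fun s hs => ?_, fun s hs => ?_⟩
  · have : (-s).re < 0 := by rw [neg_re]; linarith [hre hs]
    exact ((differentiableAt_mellin_fractIoi this).comp s
      differentiableAt_id.neg).differentiableWithinAt
  · have := norm_mellin_fractIoi_le (s := -s) (by rw [neg_re]; linarith [hre hs])
    rw [neg_re, neg_neg] at this
    rw [pow_zero, mul_one]
    exact this.trans (by rw [div_le_iff₀] <;> linarith [hre hs])

end ZetaLogBox

section TaylorCoefficients

variable {f : ℂ → ℂ} {a : ℂ} {c : ℕ → ℂ}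

theorem iteratedDeriv_eq_of_hasSum_punctured (hf : ContinuousAt f a)
    (h : ∀ᶠ s in 𝓝[≠] a, HasSum (fun j : ℕ => c j * (s - a) ^ j) (f s)) (n : ℕ) :
    iteratedDeriv n f a = n.factorial * c n := by
  have hupd : HasFPowerSeriesAt (Function.update f a (c 0))
      (FormalMultilinearSeries.ofScalars ℂ c) a := by
    rw [hasFPowerSeriesAt_iff']
    filter_upwards [eventually_nhdsWithin_iff.mp h] with z hz
    simp only [FormalMultilinearSeries.coeff_ofScalars, smul_eq_mul]
    rcases eq_or_ne z a with rfl | hza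
    · rw [Function.update_self]
      simpa using hasSum_single (f := fun n => (z - z) ^ n * c n) 0 fun b hb => by simp [hb]
    · simpa only [Function.update_of_ne hza, mul_comm] using hz hza
  have hfa : f a = c 0 := tendsto_nhds_unique (hf.tendsto.mono_left nhdsWithin_le_nhds)
    (continuousAt_update_same.mp hupd.continuousAt)
  rw [← hfa, Function.update_eq_self] at hupd
  have hcoeff := congrArg (fun p => FormalMultilinearSeries.coeff p n)
    (hupd.eq_formalMultilinearSeries hupd.analyticAt.hasFPowerSeriesAt)
  simp only [FormalMultilinearSeries.coeff_ofScalars] at hcoeff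
  rw [hcoeff, mul_div_cancel₀ _ (Nat.cast_ne_zero.mpr n.factorial_ne_zero)]

theorem iterate_dslope_self (hf : AnalyticAt ℂ f a) (k : ℕ) :
    (Function.swap dslope a)^[k] f a = iteratedDeriv k f a / k.factorial := by
  have hseries := (hf.hasFPowerSeriesAt.has_fpower_series_iterate_dslope_fslope k).coeff_zero 1
  rw [← hseries, ← FormalMultilinearSeries.coeff_ofScalars (𝕜 := ℂ)
    (p := fun n => iteratedDeriv n f a / n.factorial), ← zero_add k,
    ← FormalMultilinearSeries.coeff_iterate_fslope, zero_add]
  rfl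

theorem taylor_sum_add_iterate_dslope (hf : AnalyticAt ℂ f a) (n : ℕ) (s : ℂ) :
    f s = ∑ k ∈ range n, iteratedDeriv k f a / k.factorial * (s - a) ^ k +
      (s - a) ^ n * (Function.swap dslope a)^[n] f s := by
  induction n with
  | zero => simp
  | succ n ih =>
    have hstep := sub_smul_dslope ((Function.swap dslope a)^[n] f) a s
    rw [smul_eq_mul, iterate_dslope_self hf] at hstep
    rw [ih, sum_range_succ, Function.iterate_succ_apply', pow_succ, mul_assoc _ (s - a)]
    simp only [Function.swap, hstep]
    ring

theorem iteratedDeriv_succ_id_mul (hf : AnalyticAt ℂ f a) (k : ℕ) :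
    iteratedDeriv (k + 1) (fun s => s * f s) a =
      a * iteratedDeriv (k + 1) f a + (k + 1) * iteratedDeriv k f a := by
  have hleibniz := iteratedDeriv_fun_mul (n := k + 1) (f := fun s => s) contDiffAt_id hf.contDiffAt
  rw [hleibniz, sum_range_succ', sum_range_succ']
  simp only [iteratedDeriv_fun_id, Nat.add_eq_zero_iff, Nat.add_eq_right, Nat.reduceSubDiff,
    one_ne_zero, and_false, and_self, ↓reduceIte, mul_zero, zero_mul, sum_const_zero, zero_add,
    Nat.choose_one_right, Nat.choose_zero_right, Nat.cast_add, Nat.cast_one, mul_one, one_mul,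
    add_tsub_cancel_right, tsub_zero]
  ring

theorem LogBoxBounded.iterate_dslope_one (hf : LogBoxBounded f) (k : ℕ) :
    LogBoxBounded ((Function.swap dslope 1)^[k] f) := by
  induction k with
  | zero => exact hf
  | succ k ih =>
    rw [Function.iterate_succ_apply']
    exact ih.dslope_one

end TaylorCoefficients

section Laurent

variable {s : ℂ} {C A : ℕ → ℂ}

/-- The function `ζ(s) / s - 1 / (s - 1)` on `0 < Re s`, as a Mellin transform; it is regular at
`s = 1`. -/
noncomputable def zetaDivRegular (s : ℂ) : ℂ := -mellin fractIoi (-s)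

theorem logBoxBounded_zetaDivRegular : LogBoxBounded zetaDivRegular := by
  have h := logBoxBounded_mellin_fractIoi_neg.const_mul (-1)
  simp only [neg_one_mul] at h
  exact h

theorem riemannZeta₀_eq_one_add_mul_zetaDivRegular (hs : 0 < s.re) :
    riemannZeta₀ s = 1 + s * zetaDivRegular s := by
  rw [riemannZeta₀_eq_mellin hs, zetaDivRegular]
  ring

theorem riemannZeta_div_self (hs : 0 < s.re) (hs1 : s ≠ 1) :
    riemannZeta s / s = 1 / (s - 1) + zetaDivRegular s := by
  have hs0 : s ≠ 0 := by
    rintro rfl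
    exact hs.false
  rw [riemannZeta_eq_inv_sub_add hs1, riemannZeta₀_eq_one_add_mul_zetaDivRegular hs]
  field_simp [sub_ne_zero.mpr hs1]
  ring

theorem iteratedDeriv_riemannZeta₀_one
    (hC : ∀ᶠ s in 𝓝[≠] (1 : ℂ),
      HasSum (fun j : ℕ => C j * (s - 1) ^ j) (riemannZeta s - 1 / (s - 1))) (k : ℕ) :
    iteratedDeriv k riemannZeta₀ 1 = k.factorial * C k := by
  refine iteratedDeriv_eq_of_hasSum_punctured
    differentiable_riemannZeta₀.continuous.continuousAt ?_ k
  filter_upwards [hC, self_mem_nhdsWithin] with s hs hs1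
  rwa [riemannZeta_eq_inv_sub_add hs1, one_div, add_sub_cancel_left] at hs

theorem iteratedDeriv_zetaDivRegular_one
    (hC : ∀ᶠ s in 𝓝[≠] (1 : ℂ),
      HasSum (fun j : ℕ => C j * (s - 1) ^ j) (riemannZeta s - 1 / (s - 1))) (k : ℕ) :
    iteratedDeriv k zetaDivRegular 1 =
      k.factorial * ((-1) ^ k * (-1 + ∑ j ∈ range (k + 1), (-1) ^ j * C j)) := by
  have hpos : ∀ᶠ s : ℂ in 𝓝 1, 0 < s.re :=
    continuous_re.continuousAt.eventually_const_lt (by rw [one_re]; exact one_pos)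
  induction k with
  | zero =>
    have h0 := iteratedDeriv_riemannZeta₀_one hC 0
    rw [iteratedDeriv_zero, riemannZeta₀_eq_one_add_mul_zetaDivRegular (by simp)] at h0
    simp only [iteratedDeriv_zero, zero_add, sum_range_one, pow_zero, Nat.factorial_zero,
      Nat.cast_one, one_mul] at h0 ⊢
    linear_combination h0
  | succ k ih =>
    have hsucc := iteratedDeriv_riemannZeta₀_one hC (k + 1)
    have heq : riemannZeta₀ =ᶠ[𝓝 1] fun s => 1 + s * zetaDivRegular s := by
      filter_upwards [hpos] with s hs using riemannZeta₀_eq_one_add_mul_zetaDivRegular hs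
    rw [heq.iteratedDeriv_eq, iteratedDeriv_const_add k.succ_pos,
      iteratedDeriv_succ_id_mul logBoxBounded_zetaDivRegular.analyticAt_one, one_mul, ih] at hsucc
    rw [sum_range_succ]
    have hsign : ((-1 : ℂ) ^ (k + 1)) * (-1) ^ (k + 1) = 1 := by rw [← mul_pow]; simp
    rw [Nat.factorial_succ, Nat.cast_mul, Nat.cast_succ] at hsucc ⊢
    linear_combination hsucc - (k + 1) * k.factorial * C (k + 1) * hsign

theorem iteratedDeriv_logDeriv_riemannZeta₁_one
    (hA : ∀ᶠ s in 𝓝[≠] (1 : ℂ), HasSum (fun j : ℕ => A j * (s - 1) ^ j)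
      (deriv riemannZeta s / riemannZeta s + 1 / (s - 1))) (n : ℕ) :
    iteratedDeriv n (logDeriv riemannZeta₁) 1 = n.factorial * A n := by
  refine iteratedDeriv_eq_of_hasSum_punctured
    logBoxBounded_logDeriv_riemannZeta₁.analyticAt_one.continuousAt ?_ n
  have hne : ∀ᶠ s in 𝓝[≠] (1 : ℂ), riemannZeta₁ s ≠ 0 :=
    (differentiable_riemannZeta₁.continuous.continuousAt.eventually_ne
      (riemannZeta₁_ne_zero_of_one_le_re (by simp))).filter_mono nhdsWithin_le_nhds
  filter_upwards [hA, self_mem_nhdsWithin, hne] with s hs hs1 hs0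
  rw [riemannZeta₁_of_ne_one hs1] at hs0
  rwa [logDeriv_riemannZeta₁ hs1 (right_ne_zero_of_mul hs0)]

/-- The regular part at `s = 1` of
`ζ(s) / s * ((-1) ^ (n + 1) * n! / (s - 1) ^ (n + 1) + H⁽ⁿ⁾(s))`, where `H = ζ'/ζ + 1 / (s - 1)`. -/
noncomputable def pairSumRegular (n : ℕ) : ℂ → ℂ :=
  (fun s => (-1) ^ (n + 1) * n.factorial * (Function.swap dslope 1)^[n + 1] zetaDivRegular s) +
    zetaDivRegular * iteratedDeriv n (logDeriv riemannZeta₁) +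
      dslope (iteratedDeriv n (logDeriv riemannZeta₁)) 1

theorem logBoxBounded_pairSumRegular (n : ℕ) : LogBoxBounded (pairSumRegular n) :=
  have hH := logBoxBounded_logDeriv_riemannZeta₁.iteratedDeriv n
  have hV := logBoxBounded_zetaDivRegular
  (((hV.iterate_dslope_one (n + 1)).const_mul _).add (hV.mul hH)).add hH.dslope_one

theorem zetaDivRegular_div_pow_eq (hs1 : s ≠ 1)
    (hC : ∀ᶠ s in 𝓝[≠] (1 : ℂ),
      HasSum (fun j : ℕ => C j * (s - 1) ^ j) (riemannZeta s - 1 / (s - 1))) (n : ℕ) :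
    zetaDivRegular s / (s - 1) ^ (n + 1) = ∑ k ∈ range (n + 1),
      (-1) ^ k * (-1 + ∑ j ∈ range (k + 1), (-1) ^ j * C j) / (s - 1) ^ (n - k + 1) +
        (Function.swap dslope 1)^[n + 1] zetaDivRegular s := by
  have hs0 : s - 1 ≠ 0 := sub_ne_zero.mpr hs1
  have htaylor :=
    taylor_sum_add_iterate_dslope logBoxBounded_zetaDivRegular.analyticAt_one (n + 1) s
  rw [htaylor, add_div, mul_div_cancel_left₀ _ (pow_ne_zero _ hs0), sum_div]
  congr 1
  refine sum_congr rfl fun k hk => ?_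
  rw [iteratedDeriv_zetaDivRegular_one hC,
    mul_div_cancel_left₀ _ (Nat.cast_ne_zero.mpr k.factorial_ne_zero),
    show n + 1 = k + (n - k + 1) by grind, pow_add]
  field_simp

theorem iteratedDeriv_logDeriv_riemannZeta₁_div_eq (hs1 : s ≠ 1)
    (hA : ∀ᶠ s in 𝓝[≠] (1 : ℂ), HasSum (fun j : ℕ => A j * (s - 1) ^ j)
      (deriv riemannZeta s / riemannZeta s + 1 / (s - 1))) (n : ℕ) :
    iteratedDeriv n (logDeriv riemannZeta₁) s / (s - 1) =
      n.factorial * A n / (s - 1) + dslope (iteratedDeriv n (logDeriv riemannZeta₁)) 1 s := by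
  rw [← iteratedDeriv_logDeriv_riemannZeta₁_one hA, div_add' _ _ _ (sub_ne_zero.mpr hs1),
    mul_comm (dslope _ _ _), ← smul_eq_mul (s - 1), sub_smul_dslope, add_sub_cancel]

theorem riemannZeta_div_self_mul_eq (hs : 0 < s.re) (hs1 : s ≠ 1)
    (hC : ∀ᶠ s in 𝓝[≠] (1 : ℂ),
      HasSum (fun j : ℕ => C j * (s - 1) ^ j) (riemannZeta s - 1 / (s - 1)))
    (hA : ∀ᶠ s in 𝓝[≠] (1 : ℂ), HasSum (fun j : ℕ => A j * (s - 1) ^ j)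
      (deriv riemannZeta s / riemannZeta s + 1 / (s - 1))) (n : ℕ) :
    riemannZeta s / s * ((-1) ^ (n + 1) * n.factorial / (s - 1) ^ (n + 1) +
        iteratedDeriv n (logDeriv riemannZeta₁) s) =
      (-1) ^ (n + 1) * n.factorial / (s - 1) ^ (n + 2) +
        (-1) ^ (n + 1) * n.factorial * ∑ k ∈ range (n + 1),
          (-1) ^ k * (-1 + ∑ j ∈ range (k + 1), (-1) ^ j * C j) / (s - 1) ^ (n - k + 1) +
        n.factorial * A n / (s - 1) + pairSumRegular n s := by
  have hV := zetaDivRegular_div_pow_eq hs1 hC n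
  have hH := iteratedDeriv_logDeriv_riemannZeta₁_div_eq hs1 hA n
  rw [riemannZeta_div_self hs hs1]
  simp only [pairSumRegular, Pi.add_apply, Pi.mul_apply]
  have hlead : 1 / (s - 1) * (1 / (s - 1) ^ (n + 1)) = 1 / (s - 1) ^ (n + 2) := by
    rw [one_div_mul_one_div, ← pow_succ']
  linear_combination (-1) ^ (n + 1) * n.factorial * (hV + hlead) + hH

end Laurent

section PairSum

variable {s : ℂ} {Y : ℝ}

/-- The Dirichlet convolution of `1` with `Λ log ^ n`, whose summatory function is
`vonMangoldtPairSum n`. -/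
noncomputable def pairSumCoeff (n N : ℕ) : ℝ :=
  ∑ p ∈ N.divisorsAntidiagonal, ArithmeticFunction.vonMangoldt p.2 * Real.log p.2 ^ n

theorem pairSumCoeff_nonneg (n N : ℕ) : 0 ≤ pairSumCoeff n N :=
  sum_nonneg fun _ _ => mul_nonneg ArithmeticFunction.vonMangoldt_nonneg
    (pow_nonneg (Real.log_natCast_nonneg _) _)

theorem pairSumCoeff_le (n N : ℕ) : pairSumCoeff n N ≤ Real.log N ^ (n + 1) := by
  calc pairSumCoeff n N
      ≤ ∑ p ∈ N.divisorsAntidiagonal, ArithmeticFunction.vonMangoldt p.2 * Real.log N ^ n := by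
        refine sum_le_sum fun p hp => mul_le_mul_of_nonneg_left ?_
          ArithmeticFunction.vonMangoldt_nonneg
        have hp2 := Nat.snd_mem_divisors_of_mem_antidiagonal hp
        have hpos : (0 : ℝ) < p.2 := by exact_mod_cast Nat.pos_of_mem_divisors hp2
        have hle : (p.2 : ℝ) ≤ N := by exact_mod_cast Nat.divisor_le hp2
        have := Real.log_natCast_nonneg p.2
        gcongr
    _ = Real.log N ^ (n + 1) := by
        rw [← sum_mul, pow_succ', ← ArithmeticFunction.vonMangoldt_sum,
          Nat.sum_divisorsAntidiagonal' (f := fun _ b => ArithmeticFunction.vonMangoldt b)]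

theorem vonMangoldtPairSum_eq_sum_pairSumCoeff (n : ℕ) (Y : ℝ) :
    vonMangoldtPairSum n Y = ∑ N ∈ Icc 1 ⌊Y⌋₊, pairSumCoeff n N := by
  have hle (p : ℕ × ℕ) (h1 : 1 ≤ p.1) (h2 : 1 ≤ p.2) :
      (p.1 : ℝ) * p.2 ≤ Y ↔ p.1 * p.2 ≤ ⌊Y⌋₊ := by
    rw [Nat.le_floor_iff' (by positivity), Nat.cast_mul]
  have hmaps : ∀ p ∈ (Icc 1 ⌊Y⌋₊ ×ˢ Icc 1 ⌊Y⌋₊).filter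
      (fun p : ℕ × ℕ => (p.1 : ℝ) * (p.2 : ℝ) ≤ Y), p.1 * p.2 ∈ Icc 1 ⌊Y⌋₊ := by
    intro p hp
    simp only [mem_filter, mem_product, mem_Icc] at hp
    rw [mem_Icc]
    exact ⟨Nat.mul_pos hp.1.1.1 hp.1.2.1, (hle p hp.1.1.1 hp.1.2.1).mp hp.2⟩
  rw [vonMangoldtPairSum, ← sum_fiberwise_of_maps_to hmaps]
  refine sum_congr rfl fun N hN => sum_congr ?_ fun _ _ => rfl
  rw [mem_Icc] at hN
  ext p
  simp only [mem_filter, mem_product, mem_Icc, Nat.mem_divisorsAntidiagonal]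
  constructor
  · rintro ⟨-, hprod⟩
    exact ⟨hprod, by lia⟩
  · rintro ⟨hprod, -⟩
    have h1 : 1 ≤ p.1 := Nat.pos_of_ne_zero fun h => by simp [h] at hprod; lia
    have h2 : 1 ≤ p.2 := Nat.pos_of_ne_zero fun h => by simp [h] at hprod; lia
    exact ⟨⟨⟨⟨h1, by nlinarith⟩, h2, by nlinarith⟩, (hle p h1 h2).mpr (hprod ▸ hN.2)⟩, hprod⟩

theorem sum_pairSumCoeff_le (n N : ℕ) :
    ∑ k ∈ Icc 1 N, pairSumCoeff n k ≤ N * Real.log N ^ (n + 1) := by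
  calc ∑ k ∈ Icc 1 N, pairSumCoeff n k ≤ ∑ _k ∈ Icc 1 N, Real.log N ^ (n + 1) := by
        refine sum_le_sum fun k hk => (pairSumCoeff_le n k).trans ?_
        rw [mem_Icc] at hk
        have hpos : (0 : ℝ) < k := by exact_mod_cast hk.1
        have hle : (k : ℝ) ≤ N := by exact_mod_cast hk.2
        have := Real.log_natCast_nonneg k
        gcongr
    _ = N * Real.log N ^ (n + 1) := by simp

theorem monotone_vonMangoldtPairSum (n : ℕ) : Monotone (vonMangoldtPairSum n) := by
  intro x y hxy
  rw [vonMangoldtPairSum_eq_sum_pairSumCoeff, vonMangoldtPairSum_eq_sum_pairSumCoeff]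
  exact sum_le_sum_of_subset_of_nonneg (Icc_subset_Icc_right (Nat.floor_le_floor hxy))
    fun _ _ _ => pairSumCoeff_nonneg _ _

theorem norm_vonMangoldtPairSum_le (n : ℕ) (hY : 1 ≤ Y) :
    ‖vonMangoldtPairSum n Y‖ ≤ Y * (1 + Real.log Y) ^ (n + 1) := by
  rw [vonMangoldtPairSum_eq_sum_pairSumCoeff,
    Real.norm_of_nonneg (sum_nonneg fun _ _ => pairSumCoeff_nonneg _ _)]
  refine (sum_pairSumCoeff_le n _).trans ?_
  have hfloor : (⌊Y⌋₊ : ℝ) ≤ Y := Nat.floor_le (by linarith)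
  have hone : (0 : ℝ) < ⌊Y⌋₊ := by exact_mod_cast Nat.floor_pos.mpr hY
  have hlog : Real.log ⌊Y⌋₊ ≤ Real.log Y := Real.log_le_log hone hfloor
  have := Real.log_natCast_nonneg ⌊Y⌋₊
  gcongr
  linarith

theorem LSeries_pairSumCoeff_eq_mul_integral (n : ℕ) (hs : 1 < s.re) :
    LSeries (fun N => (pairSumCoeff n N : ℂ)) s =
      s * ∫ t in Set.Ioi (1 : ℝ), (vonMangoldtPairSum n t : ℂ) * (t : ℂ) ^ (-(s + 1)) := by
  obtain ⟨r, hr1, hr⟩ := exists_between hs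
  rw [LSeries_eq_mul_integral_of_nonneg (pairSumCoeff n) (r := r) (by linarith) hr ?_
    (pairSumCoeff_nonneg n)]
  · simp only [vonMangoldtPairSum_eq_sum_pairSumCoeff, ofReal_sum]
  · have hlog := (isLittleO_log_rpow_rpow_atTop ((n + 1 : ℕ) : ℝ) (sub_pos.mpr hr1)).isBigO
    have hmul := ((Asymptotics.isBigO_refl (fun x : ℝ => x) atTop).mul hlog).comp_tendsto
      tendsto_natCast_atTop_atTop
    refine .trans (.of_norm_le fun N => ?_) (hmul.congr' .rfl ?_)
    · rw [Real.norm_of_nonneg (sum_nonneg fun _ _ => pairSumCoeff_nonneg _ _),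
        Function.comp_apply, Real.rpow_natCast]
      exact sum_pairSumCoeff_le n N
    · filter_upwards [eventually_gt_atTop 0] with N hN
      have : (0 : ℝ) < N := by exact_mod_cast hN
      rw [Function.comp_apply, Real.rpow_sub_one this.ne', mul_div_cancel₀ _ this.ne']

theorem logMul_iterate (f : ℕ → ℂ) (n N : ℕ) :
    LSeries.logMul^[n] f N = Complex.log N ^ n * f N := by
  induction n with
  | zero => simp
  | succ n ih =>
    rw [Function.iterate_succ_apply', LSeries.logMul, ih]
    ring

theorem iteratedDeriv_inv_sub_one (n : ℕ) (s : ℂ) :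
    iteratedDeriv n (fun z : ℂ => (z - 1)⁻¹) s = (-1) ^ n * n.factorial / (s - 1) ^ (n + 1) := by
  have h := congrFun (iter_deriv_inv_linear_sub (𝕜 := ℂ) n 1 1) s
  simp only [one_mul, one_pow, mul_one] at h
  rw [iteratedDeriv_eq_iterate, h, div_eq_mul_inv, ← zpow_natCast (s - 1), ← zpow_neg]
  congr 2
  push_cast
  ring

theorem LSeries_logMul_vonMangoldt (n : ℕ) (hs : 1 < s.re) :
    LSeriesSummable (LSeries.logMul^[n] fun N => (ArithmeticFunction.vonMangoldt N : ℂ)) s ∧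
    LSeries (LSeries.logMul^[n] fun N => (ArithmeticFunction.vonMangoldt N : ℂ)) s =
      n.factorial / (s - 1) ^ (n + 1) -
        (-1) ^ n * iteratedDeriv n (logDeriv riemannZeta₁) s := by
  set f : ℕ → ℂ := fun N => (ArithmeticFunction.vonMangoldt N : ℂ) with hf
  have habs : LSeries.abscissaOfAbsConv f < s.re := by
    refine lt_of_le_of_lt ?_ (show ((1 : ℝ) : EReal) < s.re by exact_mod_cast hs)
    exact LSeries.abscissaOfAbsConv_le_of_forall_lt_LSeriesSummable fun y hy =>
      ArithmeticFunction.LSeriesSummable_vonMangoldt (by rwa [ofReal_re])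
  refine ⟨LSeriesSummable_of_abscissaOfAbsConv_lt_re
    (by rwa [LSeries.absicssaOfAbsConv_logPowMul]), ?_⟩
  have hLf : LSeries f =ᶠ[𝓝 s] fun z => (z - 1)⁻¹ - logDeriv riemannZeta₁ z := by
    filter_upwards [(isOpen_lt continuous_const continuous_re).mem_nhds hs] with z hz
    have hz1 : z ≠ 1 := by
      rintro rfl
      exact hz.false
    rw [hf, ArithmeticFunction.LSeries_vonMangoldt_eq_deriv_riemannZeta_div hz,
      logDeriv_riemannZeta₁ hz1 (riemannZeta_ne_zero_of_one_le_re (le_of_lt hz))]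
    ring
  have hs1 : s - 1 ≠ 0 := by
    rw [sub_ne_zero]
    rintro rfl
    exact hs.false
  have hH : AnalyticAt ℂ (logDeriv riemannZeta₁) s :=
    (differentiable_riemannZeta₁.analyticAt s).deriv.div (differentiable_riemannZeta₁.analyticAt s)
      (riemannZeta₁_ne_zero_of_one_le_re hs.le)
  have hinv : AnalyticAt ℂ (fun z : ℂ => (z - 1)⁻¹) s :=
    (analyticAt_id.sub analyticAt_const).inv hs1
  have hderiv := LSeries_iteratedDeriv n habs
  rw [hLf.iteratedDeriv_eq, iteratedDeriv_fun_sub hinv.contDiffAt hH.contDiffAt,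
    iteratedDeriv_inv_sub_one] at hderiv
  have hsign : ((-1 : ℂ) ^ n) * (-1) ^ n = 1 := by rw [← mul_pow]; simp
  linear_combination -(-1) ^ n * hderiv + (n.factorial / (s - 1) ^ (n + 1) -
    LSeries (LSeries.logMul^[n] f) s) * hsign

theorem LSeries_pairSumCoeff (n : ℕ) (hs : 1 < s.re) :
    (-1) ^ (n + 1) * LSeries (fun N => (pairSumCoeff n N : ℂ)) s =
      riemannZeta s * ((-1) ^ (n + 1) * n.factorial / (s - 1) ^ (n + 1) +
        iteratedDeriv n (logDeriv riemannZeta₁) s) := by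
  obtain ⟨hsummable, hL⟩ := LSeries_logMul_vonMangoldt n hs
  have hconv : (fun N => (pairSumCoeff n N : ℂ)) = LSeries.convolution 1
      (LSeries.logMul^[n] fun N => (ArithmeticFunction.vonMangoldt N : ℂ)) := by
    funext N
    rw [LSeries.convolution_def, pairSumCoeff, ofReal_sum]
    refine sum_congr rfl fun p _ => ?_
    rw [logMul_iterate, Pi.one_apply, one_mul, ← natCast_log]
    push_cast
    ring
  rw [hconv, LSeries_convolution' (LSeriesSummable_one_iff.mpr hs) hsummable,
    LSeries_one_eq_riemannZeta hs, hL]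
  have hsign : ((-1 : ℂ) ^ n) * (-1) ^ n = 1 := by rw [← mul_pow]; simp
  rw [pow_succ (-1 : ℂ)]
  linear_combination riemannZeta s * iteratedDeriv n (logDeriv riemannZeta₁) s * hsign

theorem integral_vonMangoldtPairSum (n : ℕ) (hs : 1 < s.re) :
    (-1) ^ (n + 1) * ∫ t in Set.Ioi (1 : ℝ), (vonMangoldtPairSum n t : ℂ) * (t : ℂ) ^ (-(s + 1)) =
      riemannZeta s / s * ((-1) ^ (n + 1) * n.factorial / (s - 1) ^ (n + 1) +
        iteratedDeriv n (logDeriv riemannZeta₁) s) := by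
  have hs0 : s ≠ 0 := by
    rintro rfl
    exact absurd hs (by simp)
  rw [div_mul_eq_mul_div, ← LSeries_pairSumCoeff n hs, LSeries_pairSumCoeff_eq_mul_integral n hs]
  field_simp

end PairSum

section PolylogGrowth

/-- `f u = O(u log^m u)` for some `m`, uniformly on `[1, ∞)`. Measurable functions of this kind have
a Mellin transform `∫₁^∞ f(u) u^(-s-1) du` on `Re s > 1`. -/
def HasPolylogGrowth (f : ℝ → ℂ) : Prop :=
  ∃ K : ℝ, ∃ m : ℕ, ∀ u : ℝ, 1 ≤ u → ‖f u‖ ≤ K * (u * (1 + Real.log u) ^ m)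

variable {f g : ℝ → ℂ} {s : ℂ}

theorem one_add_log_le_mul_rpow {u δ : ℝ} (hu : 1 ≤ u) (hδ : 0 < δ) :
    1 + Real.log u ≤ (1 + 1 / δ) * u ^ δ := by
  have hone := Real.one_le_rpow hu hδ.le
  have hlog := Real.log_le_rpow_div (zero_le_one.trans hu) hδ
  calc 1 + Real.log u ≤ u ^ δ + u ^ δ / δ := add_le_add hone hlog
    _ = (1 + 1 / δ) * u ^ δ := by ring

theorem norm_mul_cpow_le {K : ℝ} {m : ℕ}
    (hf : ∀ u : ℝ, 1 ≤ u → ‖f u‖ ≤ K * (u * (1 + Real.log u) ^ m)) (hs : 1 < s.re)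
    {u : ℝ} (hu : 1 ≤ u) :
    ‖f u * (u : ℂ) ^ (-(s + 1))‖ ≤
      K * (1 + (m + 1) / (s.re - 1)) ^ m * u ^ (-1 - (s.re - 1) / (m + 1)) := by
  have hu0 : 0 < u := one_pos.trans_le hu
  have hK : 0 ≤ K := by simpa using (norm_nonneg _).trans (hf 1 le_rfl)
  set δ : ℝ := (s.re - 1) / (m + 1) with hδ
  have hδ0 : 0 < δ := div_pos (by linarith) (by positivity)
  have hlog := Real.log_nonneg hu
  have hinv : (m + 1) / (s.re - 1) = 1 / δ := (one_div_div _ _).symm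
  rw [norm_mul, norm_cpow_eq_rpow_re_of_pos hu0, hinv]
  calc ‖f u‖ * u ^ (-(s + 1)).re
      ≤ K * (u * ((1 + 1 / δ) * u ^ δ) ^ m) * u ^ (-(s + 1)).re := by
        gcongr
        exact (hf u hu).trans (by gcongr; exact one_add_log_le_mul_rpow hu hδ0)
    _ = K * (1 + 1 / δ) ^ m * (u ^ (1 : ℝ) * u ^ (δ * m) * u ^ (-(s + 1)).re) := by
        rw [mul_pow, Real.rpow_one, Real.rpow_mul hu0.le, Real.rpow_natCast]
        ring
    _ = K * (1 + 1 / δ) ^ m * u ^ (-1 - δ) := by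
        rw [← Real.rpow_add hu0, ← Real.rpow_add hu0]
        have hexp : δ * m + δ = s.re - 1 := by
          rw [hδ]
          field_simp
        congr 2
        simp only [neg_re, add_re, one_re]
        linarith

theorem HasPolylogGrowth.integrableOn_mul_cpow (hf : HasPolylogGrowth f) (hmeas : Measurable f)
    (hs : 1 < s.re) :
    IntegrableOn (fun u : ℝ => f u * (u : ℂ) ^ (-(s + 1))) (Set.Ioi 1) := by
  obtain ⟨K, m, hf⟩ := hf
  have hδ : 0 < (s.re - 1) / (m + 1) := div_pos (by linarith) (by positivity)
  refine Integrable.mono' ((integrableOn_Ioi_rpow_of_lt (a := -1 - (s.re - 1) / (m + 1))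
    (by linarith) one_pos).const_mul (K * (1 + (m + 1) / (s.re - 1)) ^ m)) ?_ ?_
  · exact (hmeas.mul (by fun_prop)).aestronglyMeasurable
  · exact ae_restrict_of_forall_mem measurableSet_Ioi fun u hu =>
      norm_mul_cpow_le hf hs (le_of_lt hu)

theorem HasPolylogGrowth.exists_norm_integral_le (hf : HasPolylogGrowth f) :
    ∃ K : ℝ, 0 ≤ K ∧ ∃ p : ℕ, ∀ s : ℂ, 1 < s.re →
      ‖∫ u in Set.Ioi (1 : ℝ), f u * (u : ℂ) ^ (-(s + 1))‖ ≤ K * (1 + p / (s.re - 1)) ^ p := by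
  obtain ⟨K, m, hf⟩ := hf
  have hK : 0 ≤ K := by simpa using (norm_nonneg _).trans (hf 1 le_rfl)
  refine ⟨K, hK, m + 1, fun s hs => ?_⟩
  have hs1 : 0 < s.re - 1 := by linarith
  have hδ : 0 < (s.re - 1) / (m + 1) := div_pos hs1 (by positivity)
  have hexp : -1 - (s.re - 1) / (m + 1) < -1 := by linarith
  calc ‖∫ u in Set.Ioi (1 : ℝ), f u * (u : ℂ) ^ (-(s + 1))‖
      ≤ ∫ u in Set.Ioi (1 : ℝ),
          K * (1 + (m + 1) / (s.re - 1)) ^ m * u ^ (-1 - (s.re - 1) / (m + 1)) :=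
        norm_integral_le_of_norm_le ((integrableOn_Ioi_rpow_of_lt hexp one_pos).const_mul _)
          (ae_restrict_of_forall_mem measurableSet_Ioi fun u hu =>
            norm_mul_cpow_le hf hs (le_of_lt hu))
    _ = K * (1 + (m + 1) / (s.re - 1)) ^ m * ((m + 1) / (s.re - 1)) := by
        rw [integral_const_mul, integral_Ioi_rpow_of_lt hexp one_pos, Real.one_rpow,
          show -1 - (s.re - 1) / (m + 1) + 1 = -((s.re - 1) / (m + 1)) by ring, neg_div_neg_eq,
          one_div_div]
    _ ≤ K * (1 + (m + 1) / (s.re - 1)) ^ m * (1 + (m + 1) / (s.re - 1)) := by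
        gcongr
        linarith
    _ = K * (1 + (m + 1 : ℕ) / (s.re - 1)) ^ (m + 1) := by
        push_cast
        ring

theorem HasPolylogGrowth.sub (hf : HasPolylogGrowth f) (hg : HasPolylogGrowth g) :
    HasPolylogGrowth fun u => f u - g u := by
  obtain ⟨K, m, hf⟩ := hf
  obtain ⟨L, p, hg⟩ := hg
  have hK : 0 ≤ K := by simpa using (norm_nonneg _).trans (hf 1 le_rfl)
  have hL : 0 ≤ L := by simpa using (norm_nonneg _).trans (hg 1 le_rfl)
  refine ⟨K + L, max m p, fun u hu => ?_⟩
  have hlog : 1 ≤ 1 + Real.log u := by linarith [Real.log_nonneg hu]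
  calc ‖f u - g u‖ ≤ K * (u * (1 + Real.log u) ^ m) + L * (u * (1 + Real.log u) ^ p) :=
        norm_sub_le_of_le (hf u hu) (hg u hu)
    _ ≤ K * (u * (1 + Real.log u) ^ max m p) + L * (u * (1 + Real.log u) ^ max m p) := by
        gcongr <;> first | exact hlog | exact le_max_left m p | exact le_max_right m p
    _ = (K + L) * (u * (1 + Real.log u) ^ max m p) := by ring

theorem measurable_mul_log_pow (k : ℕ) :
    Measurable fun u : ℝ => ((u * Real.log u ^ k : ℝ) : ℂ) := by
  fun_prop

theorem hasPolylogGrowth_mul_log_pow (k : ℕ) :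
    HasPolylogGrowth fun u : ℝ => ((u * Real.log u ^ k : ℝ) : ℂ) := by
  refine ⟨1, k, fun u hu => ?_⟩
  have hlog := Real.log_nonneg hu
  rw [norm_real, Real.norm_of_nonneg (by positivity), one_mul]
  gcongr
  linarith

theorem integrableOn_pow_mul_cexp_neg_mul (k : ℕ) {a : ℂ} (ha : 0 < a.re) :
    IntegrableOn (fun v : ℝ => (v : ℂ) ^ k * cexp (-(a * v))) (Set.Ioi 0) := by
  have hreal := integrableOn_rpow_mul_exp_neg_mul_rpow (s := k) (p := 1)
    (by linarith [k.cast_nonneg (α := ℝ)]) one_pos ha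
  refine Integrable.mono' hreal (by fun_prop) ?_
  refine ae_restrict_of_forall_mem measurableSet_Ioi fun v (hv : 0 < v) => le_of_eq ?_
  rw [norm_mul, norm_pow, norm_real, Real.norm_of_nonneg hv.le, norm_exp, Real.rpow_natCast,
    Real.rpow_one]
  simp

theorem integral_pow_mul_cexp_neg_mul (k : ℕ) {a : ℂ} (ha : 0 < a.re) :
    ∫ v in Set.Ioi (0 : ℝ), (v : ℂ) ^ k * cexp (-(a * v)) = k.factorial / a ^ (k + 1) := by
  have ha0 : a ≠ 0 := by
    rintro rfl
    exact ha.false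
  induction k with
  | zero =>
    have h := integral_exp_mul_complex_Ioi (a := -a) (by simpa using ha) 0
    simpa [neg_mul] using h
  | succ k ih =>
    have hint := integrableOn_pow_mul_cexp_neg_mul k ha
    have hderiv (v : ℝ) : HasDerivAt (fun v : ℝ => (v : ℂ) ^ (k + 1) * cexp (-(a * v)))
        ((k + 1) * ((v : ℂ) ^ k * cexp (-(a * v))) -
          a * ((v : ℂ) ^ (k + 1) * cexp (-(a * v)))) v := by
      have hexp := (((hasDerivAt_id (v : ℂ)).const_mul a).neg.cexp).comp_ofReal
      refine (((hasDerivAt_pow (k + 1) (v : ℂ)).comp_ofReal).mul hexp).congr_deriv ?_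
      simp only [id, Pi.neg_apply, Nat.add_sub_cancel]
      push_cast
      ring
    have htendsto : Tendsto (fun v : ℝ => (v : ℂ) ^ (k + 1) * cexp (-(a * v))) atTop (𝓝 0) := by
      rw [tendsto_zero_iff_norm_tendsto_zero]
      refine (tendsto_rpow_mul_exp_neg_mul_atTop_nhds_zero (k + 1) a.re ha).congr' ?_
      filter_upwards [eventually_gt_atTop 0] with v hv
      rw [norm_mul, norm_pow, norm_real, Real.norm_of_nonneg hv.le, norm_exp]
      simp [← Real.rpow_natCast]
    have hparts := integral_Ioi_of_hasDerivAt_of_tendsto' (fun v _ => hderiv v)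
      ((hint.const_mul _).sub ((integrableOn_pow_mul_cexp_neg_mul (k + 1) ha).const_mul _)) htendsto
    rw [integral_sub (hint.const_mul _)
      ((integrableOn_pow_mul_cexp_neg_mul (k + 1) ha).const_mul _), integral_const_mul,
      integral_const_mul, ih] at hparts
    simp only [ofReal_zero, zero_pow k.succ_ne_zero, zero_mul, sub_zero] at hparts
    rw [← mul_right_inj' ha0, ← sub_eq_zero.mp hparts, Nat.factorial_succ]
    push_cast
    field_simp
    ring

theorem integral_mul_log_pow_mul_cpow (k : ℕ) (hs : 1 < s.re) :
    ∫ u in Set.Ioi (1 : ℝ), ((u * Real.log u ^ k : ℝ) : ℂ) * (u : ℂ) ^ (-(s + 1)) =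
      k.factorial / (s - 1) ^ (k + 1) := by
  have himage : Real.exp '' Set.Ioi 0 = Set.Ioi 1 := by rw [Real.image_exp_Ioi, Real.exp_zero]
  rw [← himage, integral_image_eq_integral_deriv_smul_of_monotoneOn measurableSet_Ioi
    (fun v _ => (Real.hasDerivAt_exp v).hasDerivWithinAt) (Real.exp_monotone.monotoneOn _)]
  have hs1 : 0 < (s - 1).re := by simpa using hs
  rw [← integral_pow_mul_cexp_neg_mul k hs1]
  refine setIntegral_congr_fun measurableSet_Ioi fun v _ => ?_
  have hexp : cexp (-((s - 1) * v)) = cexp v * cexp v * cexp (v * -(s + 1)) := by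
    rw [← Complex.exp_add, ← Complex.exp_add]
    ring_nf
  simp only [Real.log_exp, real_smul, hexp]
  rw [cpow_def_of_ne_zero (by simp), ← ofReal_log (Real.exp_pos v).le, Real.log_exp]
  push_cast
  ring

end PolylogGrowth

section PolylogLipschitz

/-- `f` is Lipschitz on every `[1, w]`, with a constant `O(log^m w)` for some `m`. In the Tauberian
argument this controls how much a main term varies over a short interval. -/
def PolylogLipschitz (f : ℝ → ℂ) : Prop :=
  ∃ K : ℝ, 0 ≤ K ∧ ∃ m : ℕ, ∀ u w : ℝ, 1 ≤ u → u ≤ w →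
    ‖f w - f u‖ ≤ K * ((w - u) * (1 + Real.log w) ^ m)

variable {f g : ℝ → ℂ}

theorem PolylogLipschitz.hasPolylogGrowth (hf : PolylogLipschitz f) : HasPolylogGrowth f := by
  obtain ⟨K, hK, m, hf⟩ := hf
  refine ⟨‖f 1‖ + K, m, fun u hu => ?_⟩
  have hlog := Real.log_nonneg hu
  have hone : 1 ≤ u * (1 + Real.log u) ^ m :=
    one_le_mul_of_one_le_of_one_le hu (one_le_pow₀ (by linarith))
  calc ‖f u‖ ≤ ‖f 1‖ + ‖f u - f 1‖ := norm_le_norm_add_norm_sub' (f u) (f 1)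
    _ ≤ ‖f 1‖ * (u * (1 + Real.log u) ^ m) + K * (u * (1 + Real.log u) ^ m) := by
        gcongr
        · exact le_mul_of_one_le_right (norm_nonneg _) hone
        · refine (hf 1 u le_rfl hu).trans ?_
          gcongr
          linarith
    _ = (‖f 1‖ + K) * (u * (1 + Real.log u) ^ m) := by ring

theorem PolylogLipschitz.add (hf : PolylogLipschitz f) (hg : PolylogLipschitz g) :
    PolylogLipschitz fun u => f u + g u := by
  obtain ⟨K, hK, m, hf⟩ := hf
  obtain ⟨L, hL, p, hg⟩ := hg
  refine ⟨K + L, add_nonneg hK hL, max m p, fun u w hu huw => ?_⟩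
  have hlog : 1 ≤ 1 + Real.log w := by linarith [Real.log_nonneg (hu.trans huw)]
  have : 0 ≤ w - u := sub_nonneg.mpr huw
  calc ‖f w + g w - (f u + g u)‖
      ≤ K * ((w - u) * (1 + Real.log w) ^ m) + L * ((w - u) * (1 + Real.log w) ^ p) := by
        rw [add_sub_add_comm]
        exact norm_add_le_of_le (hf u w hu huw) (hg u w hu huw)
    _ ≤ K * ((w - u) * (1 + Real.log w) ^ max m p) +
          L * ((w - u) * (1 + Real.log w) ^ max m p) := by
        gcongr <;> first | exact hlog | exact le_max_left m p | exact le_max_right m p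
    _ = (K + L) * ((w - u) * (1 + Real.log w) ^ max m p) := by ring

theorem PolylogLipschitz.const_mul (hf : PolylogLipschitz f) (a : ℂ) :
    PolylogLipschitz fun u => a * f u := by
  obtain ⟨K, hK, m, hf⟩ := hf
  refine ⟨‖a‖ * K, by positivity, m, fun u w hu huw => ?_⟩
  rw [← mul_sub, norm_mul, mul_assoc]
  exact mul_le_mul_of_nonneg_left (hf u w hu huw) (norm_nonneg a)

theorem polylogLipschitz_sum {ι : Type*} (t : Finset ι) {F : ι → ℝ → ℂ}
    (hF : ∀ i ∈ t, PolylogLipschitz (F i)) : PolylogLipschitz fun u => ∑ i ∈ t, F i u := by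
  classical
  induction t using Finset.induction_on with
  | empty => exact ⟨0, le_rfl, 0, fun u w _ _ => by simp⟩
  | insert i t hi ih =>
    simp only [sum_insert hi]
    exact (hF i (mem_insert_self i t)).add (ih fun j hj => hF j (mem_insert_of_mem hj))

theorem polylogLipschitz_mul_log_pow (k : ℕ) :
    PolylogLipschitz fun u : ℝ => ((u * Real.log u ^ k : ℝ) : ℂ) := by
  refine ⟨1 + k, by positivity, k, fun u w hu huw => ?_⟩
  have hderiv : ∀ t ∈ Set.Icc u w, HasDerivWithinAt (fun t : ℝ => t * Real.log t ^ k)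
      (Real.log t ^ k + k * Real.log t ^ (k - 1)) (Set.Icc u w) t := fun t ht => by
    have ht0 : t ≠ 0 := (one_pos.trans_le (hu.trans ht.1)).ne'
    have hmul := (hasDerivAt_id t).mul ((Real.hasDerivAt_log ht0).pow k)
    refine (hmul.congr_deriv ?_).hasDerivWithinAt
    simp only [id, one_mul, Pi.pow_apply]
    field_simp
  have hbound : ∀ t ∈ Set.Icc u w, ‖Real.log t ^ k + k * Real.log t ^ (k - 1)‖ ≤
      (1 + k) * (1 + Real.log w) ^ k := fun t ht => by
    have ht0 : 0 ≤ Real.log t := Real.log_nonneg (hu.trans ht.1)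
    have htw : Real.log t ≤ 1 + Real.log w := by
      linarith [Real.log_le_log (one_pos.trans_le (hu.trans ht.1)) ht.2]
    have hpow : Real.log t ^ (k - 1) ≤ (1 + Real.log w) ^ k :=
      (pow_le_pow_left₀ ht0 htw _).trans
        (pow_le_pow_right₀ (by linarith [Real.log_nonneg (hu.trans huw)]) k.pred_le)
    rw [Real.norm_of_nonneg (by positivity), add_mul, one_mul]
    gcongr
  have hmvt := (convex_Icc u w).norm_image_sub_le_of_norm_hasDerivWithin_le hderiv hbound
    (Set.left_mem_Icc.mpr huw) (Set.right_mem_Icc.mpr huw)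
  rw [Real.norm_of_nonneg (sub_nonneg.mpr huw)] at hmvt
  rw [← ofReal_sub, norm_real]
  exact hmvt.trans_eq (by ring)

end PolylogLipschitz

section MainTerm

theorem measurable_Mterm (C A : ℕ → ℂ) (n : ℕ) : Measurable (Mterm C A n) := by
  unfold Mterm
  fun_prop

theorem polylogLipschitz_Mterm (C A : ℕ → ℂ) (n : ℕ) : PolylogLipschitz (Mterm C A n) := by
  refine (((polylogLipschitz_mul_log_pow (n + 1)).const_mul _).add
    ((polylogLipschitz_sum _ fun k _ =>
      (polylogLipschitz_mul_log_pow (n - k)).const_mul _).const_mul _)).add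
    (PolylogLipschitz.const_mul ?_ _)
  simpa using polylogLipschitz_mul_log_pow 0

theorem integral_Mterm (C A : ℕ → ℂ) (n : ℕ) {s : ℂ} (hs : 1 < s.re) :
    ∫ u in Set.Ioi (1 : ℝ), Mterm C A n u * (u : ℂ) ^ (-(s + 1)) =
      (-1) ^ (n + 1) * n.factorial / (s - 1) ^ (n + 2) +
      (-1) ^ (n + 1) * n.factorial * ∑ k ∈ range (n + 1),
        (-1) ^ k * (-1 + ∑ j ∈ range (k + 1), (-1) ^ j * C j) / (s - 1) ^ (n - k + 1) +
      n.factorial * A n / (s - 1) := by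
  set F : ℕ → ℝ → ℂ := fun k u => ((u * Real.log u ^ k : ℝ) : ℂ) * (u : ℂ) ^ (-(s + 1)) with hF
  set b : ℕ → ℂ := fun k => (-1) ^ (n + 1) * (n.choose k * (-1) ^ k * k.factorial *
    (-1 + ∑ j ∈ range (k + 1), (-1) ^ j * C j)) with hb
  have hint (k : ℕ) : IntegrableOn (F k) (Set.Ioi 1) :=
    (hasPolylogGrowth_mul_log_pow k).integrableOn_mul_cpow (measurable_mul_log_pow k) hs
  have hval (k : ℕ) : ∫ u in Set.Ioi (1 : ℝ), F k u = k.factorial / (s - 1) ^ (k + 1) :=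
    integral_mul_log_pow_mul_cpow k hs
  have hterms : (fun u : ℝ => Mterm C A n u * (u : ℂ) ^ (-(s + 1))) = fun u =>
      (-1) ^ (n + 1) * (1 / (n + 1)) * F (n + 1) u + ∑ k ∈ range (n + 1), b k * F (n - k) u +
        n.factorial * A n * F 0 u := by
    funext u
    simp only [Mterm, hF, hb, mul_sum, add_mul, sum_mul, pow_zero, mul_one, mul_assoc]
  have hsum := integrable_finsetSum (range (n + 1)) fun k _ => (hint (n - k)).const_mul (b k)
  rw [hterms, integral_add (by exact ((hint _).const_mul _).add hsum) ((hint 0).const_mul _),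
    integral_add ((hint (n + 1)).const_mul _) hsum,
    integral_finsetSum _ fun k _ => (hint (n - k)).const_mul (b k)]
  simp only [integral_const_mul, hval, mul_sum]
  refine congrArg₂ (· + ·) (congrArg₂ (· + ·) ?_ (sum_congr rfl fun k hk => ?_)) ?_
  · rw [Nat.factorial_succ]
    push_cast
    have : (n : ℂ) + 1 ≠ 0 := n.cast_add_one_ne_zero
    field_simp
  · rw [← Nat.choose_mul_factorial_mul_factorial (Nat.lt_succ_iff.mp (mem_range.mp hk)), hb]
    push_cast
    ring
  · simp [div_eq_mul_inv]

end MainTerm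

section RieszMean

/-- The Riesz mean `∫₁^x E(u) (x - u) du` of order one, not normalised. -/
noncomputable def rieszMean (E : ℝ → ℂ) (x : ℝ) : ℂ :=
  ∫ u in Set.Ioi (1 : ℝ), E u * (max (x - u) 0 : ℝ)

/-- The integrand of Perron's formula for the Riesz mean of a function with Mellin transform `G`. -/
noncomputable def rieszIntegrand (G : ℂ → ℂ) (x : ℝ) (s : ℂ) : ℂ :=
  (x : ℂ) ^ (s + 2) / ((s + 1) * (s + 2)) * G s

variable {w : ℂ} {E : ℝ → ℂ} {G : ℂ → ℂ}

theorem hasMellin_max_one_sub (hw : 0 < w.re) :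
    HasMellin (fun t : ℝ => ((max (1 - t) 0 : ℝ) : ℂ)) w (1 / (w * (w + 1))) := by
  have hone := hasMellin_one_Ioc hw
  have hid := hasMellin_cpow_Ioc (1 : ℂ) (s := w) (by simp; linarith)
  have hsub := hasMellin_sub hone.1 hid.1
  have hw0 : w ≠ 0 := fun h => by simp [h] at hw
  have hw1 : w + 1 ≠ 0 := fun h => by
    have := congrArg re h
    simp only [add_re, one_re, zero_re] at this
    linarith
  have hval : 1 / w - 1 / (w + 1) = 1 / (w * (w + 1)) := by
    field_simp
    ring
  have hEq : Set.EqOn (fun t : ℝ => (Set.Ioc 0 1).indicator (fun _ => (1 : ℂ)) t -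
      (Set.Ioc 0 1).indicator (fun t : ℝ => (t : ℂ) ^ (1 : ℂ)) t)
      (fun t : ℝ => ((max (1 - t) 0 : ℝ) : ℂ)) (Set.Ioi 0) := fun t ht => by
    by_cases h : t ≤ 1
    · have hmem : t ∈ Set.Ioc (0 : ℝ) 1 := ⟨ht, h⟩
      simp [Set.indicator_of_mem hmem, max_eq_left (sub_nonneg.mpr h)]
    · have hmem : t ∉ Set.Ioc (0 : ℝ) 1 := fun h' => h h'.2
      simp [Set.indicator_of_notMem hmem, max_eq_right (sub_nonpos.mpr (not_le.mp h).le)]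
  rw [hone.2, hid.2, hval] at hsub
  refine ⟨hsub.1.congr_fun (fun t ht => ?_) measurableSet_Ioi,
    (setIntegral_congr_fun measurableSet_Ioi fun t ht => ?_).trans hsub.2⟩ <;>
  simp only [← hEq ht]

theorem norm_inv_mul_add_one_le (hw : 1 ≤ w.re) :
    ‖1 / (w * (w + 1))‖ ≤ (1 + w.im ^ 2)⁻¹ := by
  have hsq {z : ℂ} (hz : 1 ≤ z.re) : 1 + z.im ^ 2 ≤ ‖z‖ ^ 2 := by
    rw [← normSq_eq_norm_sq, normSq_apply]
    nlinarith
  have h0 := hsq hw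
  have h1 := hsq (z := w + 1) (by simp; linarith)
  rw [add_im, one_im, add_zero] at h1
  rw [norm_div, norm_one, one_div, norm_mul]
  refine inv_anti₀ (by positivity) (abs_le_of_sq_le_sq' ?_ (by positivity)).2
  nlinarith [mul_le_mul h0 h1 (by positivity) (by positivity)]

theorem max_one_sub_eq_integral {κ t : ℝ} (hκ : 1 ≤ κ) (ht : 0 < t) :
    ((max (1 - t) 0 : ℝ) : ℂ) = (1 / (2 * Real.pi) : ℝ) • ∫ y : ℝ,
      (t : ℂ) ^ (-(κ + y * I)) * (1 / ((κ + y * I) * (κ + y * I + 1))) := by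
  have hmellin (y : ℝ) := hasMellin_max_one_sub (w := κ + y * I) (by simp; linarith)
  have hcont : Continuous fun t : ℝ => ((max (1 - t) 0 : ℝ) : ℂ) := by fun_prop
  have hvert : VerticalIntegrable (mellin fun t : ℝ => ((max (1 - t) 0 : ℝ) : ℂ)) κ := by
    unfold VerticalIntegrable
    simp only [fun y => (hmellin y).2]
    refine integrable_inv_one_add_sq.mono'
      (Measurable.aestronglyMeasurable (by fun_prop)) (ae_of_all _ fun y => ?_)
    simpa using norm_inv_mul_add_one_le (w := κ + y * I) (by simpa using hκ)
  rw [← mellinInv_mellin_eq κ _ ht (by simpa using (hmellin 0).1) hvert hcont.continuousAt]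
  simp only [mellinInv, fun y => (hmellin y).2, smul_eq_mul]

theorem max_sub_eq_integral {σ u x : ℝ} (hσ : 0 ≤ σ) (hu : 0 < u) (hx : 0 < x) :
    ((max (x - u) 0 : ℝ) : ℂ) = (1 / (2 * Real.pi) : ℝ) • ∫ y : ℝ,
      (u : ℂ) ^ (-(σ + y * I + 1)) * ((x : ℂ) ^ (σ + y * I + 2) /
        ((σ + y * I + 1) * (σ + y * I + 2))) := by
  have hscale : max (x - u) 0 = x * max (1 - u / x) 0 := by
    rw [mul_max_of_nonneg _ _ hx.le, mul_zero, mul_sub, mul_one, mul_div_cancel₀ _ hx.ne']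
  have hx0 : (x : ℂ) ≠ 0 := ofReal_ne_zero.mpr hx.ne'
  rw [hscale, ofReal_mul, max_one_sub_eq_integral (κ := σ + 1) (by linarith) (div_pos hu hx),
    mul_smul_comm, ← integral_const_mul]
  refine congrArg _ (integral_congr_ae (ae_of_all _ fun y => ?_))
  have hpow : ((u / x : ℝ) : ℂ) ^ (-(σ + y * I + 1)) =
      (u : ℂ) ^ (-(σ + y * I + 1)) * (x : ℂ) ^ (σ + y * I + 1) := by
    rw [ofReal_div, div_cpow_ofReal_nonneg hu.le hx.le, cpow_neg (x : ℂ), div_inv_eq_mul]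
  have hw : ((σ + 1 : ℝ) : ℂ) + y * I = σ + y * I + 1 := by
    push_cast
    ring
  have hw2 : (σ : ℂ) + y * I + 1 + 1 = σ + y * I + 2 := by ring
  have hxpow : (x : ℂ) ^ (σ + y * I + 2) = x * (x : ℂ) ^ (σ + y * I + 1) := by
    rw [← hw2, cpow_add _ _ hx0, cpow_one, mul_comm]
  simp only [hw, hpow, hw2, hxpow]
  ring

theorem norm_cpow_div_le {s : ℂ} {x : ℝ} (hs : 0 ≤ s.re) (hx : 0 < x) :
    ‖(x : ℂ) ^ (s + 2) / ((s + 1) * (s + 2))‖ ≤ x ^ (s.re + 2) * (1 + s.im ^ 2)⁻¹ := by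
  have hker := norm_inv_mul_add_one_le (w := s + 1) (by simpa using hs)
  rw [add_assoc, one_add_one_eq_two, add_im, one_im, add_zero] at hker
  rw [div_eq_mul_one_div, norm_mul, norm_cpow_eq_rpow_re_of_pos hx]
  exact mul_le_mul (by simp) hker (norm_nonneg _) (by positivity)

theorem HasPolylogGrowth.integrable_uncurry_mul_rieszKernel (hE : HasPolylogGrowth E)
    (hmeas : Measurable E) {σ x : ℝ} (hσ : 1 < σ) (hx : 0 < x) :
    Integrable (Function.uncurry fun u y : ℝ => E u * (u : ℂ) ^ (-(σ + y * I + 1)) *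
        ((x : ℂ) ^ (σ + y * I + 2) / ((σ + y * I + 1) * (σ + y * I + 2))))
      ((volume.restrict (Set.Ioi (1 : ℝ))).prod volume) := by
  have hE_int : Integrable (fun u : ℝ => ‖E u * (u : ℂ) ^ (-((σ : ℂ) + 1))‖)
      (volume.restrict (Set.Ioi (1 : ℝ))) :=
    (hE.integrableOn_mul_cpow hmeas (s := σ) (by simpa using hσ)).norm
  refine (hE_int.mul_prod (integrable_inv_one_add_sq.const_mul (x ^ (σ + 2)))).mono'
    (Measurable.aestronglyMeasurable (by simp only [Function.uncurry_def]; fun_prop)) ?_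
  filter_upwards [Measure.quasiMeasurePreserving_fst.ae (ae_restrict_mem measurableSet_Ioi)]
    with ⟨u, y⟩ (hu : 1 < u)
  have hu0 : 0 < u := one_pos.trans hu
  have hk_le := norm_cpow_div_le (s := σ + y * I) (by simp; linarith) hx
  have hu_pow : ‖(u : ℂ) ^ (-(σ + y * I + 1))‖ = ‖(u : ℂ) ^ (-((σ : ℂ) + 1))‖ := by
    rw [norm_cpow_eq_rpow_re_of_pos hu0, norm_cpow_eq_rpow_re_of_pos hu0]
    simp
  rw [Function.uncurry_apply_pair, norm_mul, norm_mul, norm_mul, hu_pow]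
  gcongr
  simpa using hk_le

theorem integral_mul_rieszKernel
    (hG : ∀ s : ℂ, 1 < s.re → ∫ u in Set.Ioi (1 : ℝ), E u * (u : ℂ) ^ (-(s + 1)) = G s)
    {σ : ℝ} (hσ : 1 < σ) (x y : ℝ) :
    ∫ u in Set.Ioi (1 : ℝ), E u * (u : ℂ) ^ (-(σ + y * I + 1)) *
        ((x : ℂ) ^ (σ + y * I + 2) / ((σ + y * I + 1) * (σ + y * I + 2))) =
      rieszIntegrand G x (σ + y * I) := by
  rw [integral_mul_const, hG _ (by simpa using hσ), rieszIntegrand, mul_comm]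

theorem integrable_rieszIntegrand (hE : HasPolylogGrowth E) (hmeas : Measurable E)
    (hG : ∀ s : ℂ, 1 < s.re → ∫ u in Set.Ioi (1 : ℝ), E u * (u : ℂ) ^ (-(s + 1)) = G s)
    {σ x : ℝ} (hσ : 1 < σ) (hx : 0 < x) :
    Integrable (fun y : ℝ => rieszIntegrand G x (σ + y * I)) := by
  simpa only [Function.uncurry_apply_pair, integral_mul_rieszKernel hG hσ] using
    (hE.integrable_uncurry_mul_rieszKernel hmeas hσ hx).integral_prod_right

theorem rieszMean_eq_integral (hE : HasPolylogGrowth E) (hmeas : Measurable E)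
    (hG : ∀ s : ℂ, 1 < s.re → ∫ u in Set.Ioi (1 : ℝ), E u * (u : ℂ) ^ (-(s + 1)) = G s)
    {σ x : ℝ} (hσ : 1 < σ) (hx : 0 < x) :
    rieszMean E x = (1 / (2 * Real.pi) : ℝ) • ∫ y : ℝ, rieszIntegrand G x (σ + y * I) := by
  calc rieszMean E x
      = ∫ u in Set.Ioi (1 : ℝ), (1 / (2 * Real.pi) : ℝ) • ∫ y : ℝ,
          E u * (u : ℂ) ^ (-(σ + y * I + 1)) *
            ((x : ℂ) ^ (σ + y * I + 2) / ((σ + y * I + 1) * (σ + y * I + 2))) := by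
        refine setIntegral_congr_fun measurableSet_Ioi fun u (hu : 1 < u) => ?_
        simp only [mul_assoc]
        rw [max_sub_eq_integral (σ := σ) (by linarith) (one_pos.trans hu) hx, mul_smul_comm,
          integral_const_mul]
    _ = (1 / (2 * Real.pi) : ℝ) • ∫ y : ℝ, rieszIntegrand G x (σ + y * I) := by
        rw [integral_smul,
          integral_integral_swap (hE.integrable_uncurry_mul_rieszKernel hmeas hσ hx)]
        simp only [integral_mul_rieszKernel hG hσ]

theorem norm_rieszMean_le (hE : HasPolylogGrowth E) (hmeas : Measurable E)
    (hG : ∀ s : ℂ, 1 < s.re → ∫ u in Set.Ioi (1 : ℝ), E u * (u : ℂ) ^ (-(s + 1)) = G s)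
    {σ x : ℝ} (hσ : 1 < σ) (hx : 0 < x) :
    ‖rieszMean E x‖ ≤ ‖∫ y : ℝ, rieszIntegrand G x (σ + y * I)‖ := by
  have hpi : ‖(1 / (2 * Real.pi) : ℝ)‖ ≤ 1 := by
    rw [Real.norm_of_nonneg (by positivity), div_le_one (by positivity)]
    linarith [Real.pi_gt_three]
  rw [rieszMean_eq_integral hE hmeas hG hσ hx, norm_smul]
  exact mul_le_of_le_one_left (norm_nonneg _) hpi

end RieszMean

section ContourShift

variable {F G : ℂ → ℂ} {s : ℂ} {c r B : ℝ}

theorem eventually_mul_pow_mul_exp_neg_le (K : ℝ) (q : ℕ) {b c : ℝ} (hbc : b < c) :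
    ∀ᶠ r : ℝ in atTop, K * r ^ q * Real.exp (-c * r) ≤ Real.exp (-b * r) := by
  have hlittle := (isLittleO_pow_exp_pos_mul_atTop q (sub_pos.mpr hbc)).const_mul_left K
  filter_upwards [hlittle.bound one_pos] with r hr
  rw [one_mul, Real.norm_of_nonneg (Real.exp_pos _).le] at hr
  calc K * r ^ q * Real.exp (-c * r)
      ≤ Real.exp ((c - b) * r) * Real.exp (-c * r) := by
        gcongr
        exact (Real.le_norm_self _).trans hr
    _ = Real.exp (-b * r) := by
        rw [← Real.exp_add]
        ring_nf

theorem norm_integral_right_side_le {a b T : ℝ}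
    (hF : DifferentiableOn ℂ F (Set.uIcc a b ×ℂ Set.uIcc (-T) T)) :
    ‖∫ y in (-T)..T, F (b + y * I)‖ ≤ ‖∫ y in (-T)..T, F (a + y * I)‖ +
      ‖∫ v in a..b, F (v + T * I)‖ + ‖∫ v in a..b, F (v + (-T : ℝ) * I)‖ := by
  have hrect := Complex.integral_boundary_rect_eq_zero_of_differentiableOn F ⟨a, -T⟩ ⟨b, T⟩ hF
  have hsides : I • ∫ y in (-T)..T, F (b + y * I) = I • (∫ y in (-T)..T, F (a + y * I)) +
      (∫ v in a..b, F (v + T * I)) - ∫ v in a..b, F (v + (-T : ℝ) * I) := by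
    linear_combination hrect
  have hnorm (z : ℂ) : ‖I • z‖ = ‖z‖ := by rw [norm_smul, norm_I, one_mul]
  rw [← hnorm, hsides, ← hnorm (∫ y in (-T)..T, F (a + y * I))]
  exact (norm_sub_le _ _).trans (by gcongr; exact norm_add_le _ _)

theorem norm_integral_le_add_of_norm_le_inv_one_add_sq {f : ℝ → ℂ} {M T : ℝ} (hf : Integrable f)
    (hM : ∀ y, ‖f y‖ ≤ M * (1 + y ^ 2)⁻¹) (hT : 0 < T) :
    ‖∫ y, f y‖ ≤ ‖∫ y in (-T)..T, f y‖ + 2 * M / T := by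
  have hTT : -T ≤ T := by linarith
  have hint : Integrable fun y : ℝ => (1 + y ^ 2)⁻¹ := integrable_inv_one_add_sq
  have hM0 : 0 ≤ M := by simpa using (norm_nonneg _).trans (hM 0)
  have htail : ∫ y in (Set.Ioc (-T) T)ᶜ, (1 + y ^ 2)⁻¹ ≤ 2 / T := by
    rw [setIntegral_compl measurableSet_Ioc hint, integral_univ_inv_one_add_sq,
      ← intervalIntegral.integral_of_le hTT, integral_inv_one_add_sq, Real.arctan_neg]
    have := Real.arctan_inv_of_pos hT
    have hle := Real.le_tan (Real.arctan_nonneg.mpr (inv_nonneg.mpr hT.le))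
      (Real.arctan_lt_pi_div_two _)
    rw [Real.tan_arctan] at hle
    rw [div_eq_mul_inv]
    linarith
  rw [intervalIntegral.integral_of_le hTT,
    ← integral_add_compl (measurableSet_Ioc (a := -T) (b := T)) hf]
  refine (norm_add_le _ _).trans (add_le_add_right ?_ _)
  calc ‖∫ y in (Set.Ioc (-T) T)ᶜ, f y‖
      ≤ ∫ y in (Set.Ioc (-T) T)ᶜ, M * (1 + y ^ 2)⁻¹ :=
        norm_integral_le_of_norm_le (hint.const_mul M).integrableOn (ae_of_all _ hM)
    _ ≤ M * (2 / T) := by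
        rw [integral_const_mul]
        gcongr
    _ = 2 * M / T := by ring

theorem differentiableOn_rieszIntegrand {U : Set ℂ} {x : ℝ} (hx : 0 < x)
    (hU : ∀ s ∈ U, 0 ≤ s.re) (hG : DifferentiableOn ℂ G U) :
    DifferentiableOn ℂ (rieszIntegrand G x) U := by
  have hne {s : ℂ} (hs : s ∈ U) {k : ℝ} (hk : 0 < k) : s + k ≠ 0 := fun h => by
    have := congrArg re h
    simp only [add_re, ofReal_re, zero_re] at this
    linarith [hU s hs]
  refine DifferentiableOn.mul (DifferentiableOn.div ?_ (by fun_prop) fun s hs => ?_) hG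
  · exact DifferentiableOn.const_cpow (by fun_prop) (.inl (ofReal_ne_zero.mpr hx.ne'))
  · exact mul_ne_zero (mod_cast hne hs one_pos) (mod_cast hne hs two_pos)

theorem norm_rieszIntegrand_exp_le (hs : 0 ≤ s.re) (hB : ‖G s‖ ≤ B) :
    ‖rieszIntegrand G (Real.exp (r ^ 2)) s‖ ≤
      B * Real.exp (r ^ 2 * (s.re + 2)) * (1 + s.im ^ 2)⁻¹ := by
  have hker := norm_cpow_div_le hs (Real.exp_pos (r ^ 2))
  rw [← Real.exp_mul] at hker
  rw [rieszIntegrand, norm_mul, mul_comm, mul_assoc]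
  gcongr
  exact (norm_nonneg _).trans hB

theorem one_div_sq_le_div (hc : 0 < c) (hr : 1 / c ≤ r) : 1 / r ^ 2 ≤ c / r := by
  have hr0 : 0 < r := (one_div_pos.mpr hc).trans_le hr
  have hcr : 1 ≤ c * r := by rwa [div_le_iff₀' hc] at hr
  rw [div_le_div_iff₀ (by positivity) hr0]
  nlinarith

/-- A segment at height `±e^r` of length at most `2` contributes at most as much as the line
`Re s = 1 - c / r`, since the kernel is `O(e^{-2r})` there. -/
theorem norm_integral_horizontal_side_le {t : ℝ} (hc : 0 < c) (hc1 : c ≤ 1) (hr : 1 / c ≤ r)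
    (hB : ∀ s ∈ logBox c (Real.exp r), ‖G s‖ ≤ B) (ht : |t| = Real.exp r) :
    ‖∫ v in (1 - c / r)..(1 + 1 / r ^ 2), rieszIntegrand G (Real.exp (r ^ 2)) (v + t * I)‖ ≤
      2 * Real.exp 1 * (B * Real.exp (3 * r ^ 2 - c * r)) := by
  have hcr : 1 ≤ c * r := by rwa [div_le_iff₀' hc] at hr
  have hr1 : 1 ≤ r := (one_le_one_div hc hc1).trans hr
  have hinv := one_div_sq_le_div hc hr
  have hcr1 : c / r ≤ 1 := div_le_one_of_le₀ (by linarith) (by linarith)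
  have hle_right : 1 - c / r ≤ 1 + 1 / r ^ 2 := by linarith [show 0 < 1 / r ^ 2 by positivity]
  have hheight : (1 + t ^ 2)⁻¹ ≤ Real.exp (-(2 * r)) := by
    rw [← sq_abs, ht, ← Real.exp_nat_mul, Nat.cast_two, Real.exp_neg]
    gcongr
    linarith
  have hle (v : ℝ) (hv : v ∈ Set.uIoc (1 - c / r) (1 + 1 / r ^ 2)) :
      ‖rieszIntegrand G (Real.exp (r ^ 2)) (v + t * I)‖ ≤
        B * Real.exp (3 * r ^ 2 + 1) * Real.exp (-(2 * r)) := by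
    rw [Set.uIoc_of_le hle_right] at hv
    have hmem : (v + t * I : ℂ) ∈ logBox c (Real.exp r) :=
      ⟨by simp [ht], by simpa using abs_le.mpr ⟨by linarith [hv.1], by linarith [hv.2]⟩⟩
    have hB0 : 0 ≤ B := (norm_nonneg _).trans (hB _ hmem)
    have hexp : r ^ 2 * (v + 2) ≤ 3 * r ^ 2 + 1 := by
      have : r ^ 2 * (1 + 1 / r ^ 2) = r ^ 2 + 1 := by field_simp
      nlinarith [mul_le_mul_of_nonneg_left hv.2 (sq_nonneg r)]
    calc _ ≤ B * Real.exp (r ^ 2 * (v + 2)) * (1 + t ^ 2)⁻¹ := by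
          simpa using norm_rieszIntegrand_exp_le (r := r) (by simp; linarith [hv.1]) (hB _ hmem)
      _ ≤ _ := by gcongr
  have hB0 : 0 ≤ B := (norm_nonneg _).trans (hB (1 + t * I)
    ⟨by simp [ht], by simpa using by positivity⟩)
  have hcr2 : c * r ≤ 2 * r := by nlinarith
  calc _ ≤ B * Real.exp (3 * r ^ 2 + 1) * Real.exp (-(2 * r)) *
        |1 + 1 / r ^ 2 - (1 - c / r)| := intervalIntegral.norm_integral_le_of_norm_le_const hle
    _ ≤ B * Real.exp (3 * r ^ 2 + 1) * Real.exp (-(c * r)) * 2 := by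
        rw [abs_of_nonneg (by linarith)]
        gcongr
        linarith
    _ = 2 * Real.exp 1 * (B * Real.exp (3 * r ^ 2 - c * r)) := by
        rw [Real.exp_add, sub_eq_add_neg, Real.exp_add]
        ring

theorem norm_integral_left_side_le (hc : 0 < c) (hcr : c ≤ r)
    (hB : ∀ s ∈ logBox c (Real.exp r), ‖G s‖ ≤ B) :
    ‖∫ y in (-Real.exp r)..Real.exp r,
      rieszIntegrand G (Real.exp (r ^ 2)) ((1 - c / r : ℝ) + y * I)‖ ≤
      Real.pi * (B * Real.exp (3 * r ^ 2 - c * r)) := by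
  have hr0 : 0 < r := hc.trans_le hcr
  have hB0 : 0 ≤ B := (norm_nonneg _).trans (hB 1
    ⟨by simpa using (Real.exp_pos r).le, by simpa using by positivity⟩)
  have hint := integrable_inv_one_add_sq.const_mul (B * Real.exp (3 * r ^ 2 - c * r))
  have hTT : -Real.exp r ≤ Real.exp r := by linarith [Real.exp_pos r]
  have hle (y : ℝ) (hy : y ∈ Set.Ioc (-Real.exp r) (Real.exp r)) :
      ‖rieszIntegrand G (Real.exp (r ^ 2)) ((1 - c / r : ℝ) + y * I)‖ ≤
        B * Real.exp (3 * r ^ 2 - c * r) * (1 + y ^ 2)⁻¹ := by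
    have hmem : ((1 - c / r : ℝ) + y * I : ℂ) ∈ logBox c (Real.exp r) :=
      ⟨by simpa using abs_le.mpr ⟨hy.1.le, hy.2⟩, by simp [abs_of_pos (div_pos hc hr0)]⟩
    have hexp : r ^ 2 * (1 - c / r + 2) = 3 * r ^ 2 - c * r := by
      field_simp
      ring
    simpa [hexp] using norm_rieszIntegrand_exp_le (r := r)
      (by simpa using div_le_one_of_le₀ hcr hr0.le) (hB _ hmem)
  calc _ ≤ ∫ y in (-Real.exp r)..Real.exp r,
        B * Real.exp (3 * r ^ 2 - c * r) * (1 + y ^ 2)⁻¹ :=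
        intervalIntegral.norm_integral_le_of_norm_le hTT (ae_of_all _ hle) hint.intervalIntegrable
    _ ≤ ∫ y : ℝ, B * Real.exp (3 * r ^ 2 - c * r) * (1 + y ^ 2)⁻¹ := by
        rw [intervalIntegral.integral_of_le hTT]
        exact setIntegral_le_integral hint (ae_of_all _ fun y => by positivity)
    _ = Real.pi * (B * Real.exp (3 * r ^ 2 - c * r)) := by
        rw [integral_const_mul, integral_univ_inv_one_add_sq, mul_comm]

theorem norm_integral_rieszIntegrand_segment_le (hc : 0 < c) (hc1 : c ≤ 1) (hr : 1 / c ≤ r)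
    (hG : DifferentiableOn ℂ G (logBox c (Real.exp r)))
    (hB : ∀ s ∈ logBox c (Real.exp r), ‖G s‖ ≤ B) :
    ‖∫ y in (-Real.exp r)..Real.exp r,
      rieszIntegrand G (Real.exp (r ^ 2)) ((1 + 1 / r ^ 2 : ℝ) + y * I)‖ ≤
      (Real.pi + 4 * Real.exp 1) * (B * Real.exp (3 * r ^ 2 - c * r)) := by
  have hr1 : 1 ≤ r := (one_le_one_div hc hc1).trans hr
  have hinv := one_div_sq_le_div hc hr
  have hcr1 : c / r ≤ 1 := div_le_one_of_le₀ (by linarith) (by linarith)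
  have hinv0 : 0 < 1 / r ^ 2 := by positivity
  have hTT : -Real.exp r ≤ Real.exp r := by linarith [Real.exp_pos r]
  have hsub : Set.uIcc (1 - c / r) (1 + 1 / r ^ 2) ×ℂ Set.uIcc (-Real.exp r) (Real.exp r) ⊆
      logBox c (Real.exp r) := fun s hs => by
    rw [mem_reProdIm, Set.uIcc_of_le (by linarith), Set.uIcc_of_le hTT] at hs
    rw [logBox, Set.mem_ofPred, Real.log_exp]
    exact ⟨abs_le.mpr hs.2, abs_le.mpr ⟨by linarith [hs.1.1], by linarith [hs.1.2]⟩⟩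
  have hdiff : DifferentiableOn ℂ (rieszIntegrand G (Real.exp (r ^ 2)))
      (logBox c (Real.exp r)) :=
    differentiableOn_rieszIntegrand (Real.exp_pos _) (fun s hs => by
      have := (abs_le.mp hs.2).1
      rw [Real.log_exp] at this
      linarith) hG
  have hleft := norm_integral_left_side_le hc (by linarith) hB
  have htop := norm_integral_horizontal_side_le hc hc1 hr hB (abs_of_pos (Real.exp_pos r))
  have hbot := norm_integral_horizontal_side_le hc hc1 hr hB
    ((abs_neg _).trans (abs_of_pos (Real.exp_pos r)))
  refine (norm_integral_right_side_le (hdiff.mono hsub)).trans ?_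
  linarith

theorem norm_integral_rieszIntegrand_le {M : ℝ} (hc : 0 < c) (hc1 : c ≤ 1) (hr : 1 / c ≤ r)
    (hG : DifferentiableOn ℂ G (logBox c (Real.exp r)))
    (hB : ∀ s ∈ logBox c (Real.exp r), ‖G s‖ ≤ B)
    (hM : ∀ s : ℂ, s.re = 1 + 1 / r ^ 2 → ‖G s‖ ≤ M)
    (hint : Integrable fun y : ℝ =>
      rieszIntegrand G (Real.exp (r ^ 2)) ((1 + 1 / r ^ 2 : ℝ) + y * I)) :
    ‖∫ y : ℝ, rieszIntegrand G (Real.exp (r ^ 2)) ((1 + 1 / r ^ 2 : ℝ) + y * I)‖ ≤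
      ((Real.pi + 4 * Real.exp 1) * B + 2 * Real.exp 1 * M) * Real.exp (3 * r ^ 2 - c * r) := by
  have hr1 : 1 ≤ r := (one_le_one_div hc hc1).trans hr
  have hM0 : 0 ≤ M := (norm_nonneg _).trans (hM ((1 + 1 / r ^ 2 : ℝ) : ℂ) (ofReal_re _))
  have hline (y : ℝ) :
      ‖rieszIntegrand G (Real.exp (r ^ 2)) ((1 + 1 / r ^ 2 : ℝ) + y * I)‖ ≤
        M * Real.exp (3 * r ^ 2 + 1) * (1 + y ^ 2)⁻¹ := by
    have hre : ((1 + 1 / r ^ 2 : ℝ) + y * I : ℂ).re = 1 + 1 / r ^ 2 := by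
      simp only [add_re, ofReal_re, re_ofReal_mul, I_re, mul_zero, add_zero]
    have him : ((1 + 1 / r ^ 2 : ℝ) + y * I : ℂ).im = y := by
      simp only [add_im, ofReal_im, im_ofReal_mul, I_im, mul_one, zero_add]
    have hexp : r ^ 2 * (1 + 1 / r ^ 2 + 2) = 3 * r ^ 2 + 1 := by
      field_simp
      ring
    have h := norm_rieszIntegrand_exp_le (r := r) (by rw [hre]; positivity) (hM _ hre)
    rwa [hre, him, hexp] at h
  have htail : 2 * (M * Real.exp (3 * r ^ 2 + 1)) / Real.exp r ≤
      2 * Real.exp 1 * M * Real.exp (3 * r ^ 2 - c * r) := by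
    calc 2 * (M * Real.exp (3 * r ^ 2 + 1)) / Real.exp r
        = 2 * Real.exp 1 * M * Real.exp (3 * r ^ 2 - r) := by
          rw [Real.exp_add, Real.exp_sub]
          ring
      _ ≤ _ := by
          gcongr
          nlinarith
  have hsplit := norm_integral_le_add_of_norm_le_inv_one_add_sq hint hline (Real.exp_pos r)
  have hseg := norm_integral_rieszIntegrand_segment_le hc hc1 hr hG hB
  linarith

theorem HasPolylogGrowth.exists_norm_integral_le_pow {E : ℝ → ℂ} (hE : HasPolylogGrowth E) :
    ∃ K : ℝ, ∃ q : ℕ, ∀ r : ℝ, 1 ≤ r → ∀ s : ℂ, s.re = 1 + 1 / r ^ 2 →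
      ‖∫ u in Set.Ioi (1 : ℝ), E u * (u : ℂ) ^ (-(s + 1))‖ ≤ K * r ^ q := by
  obtain ⟨K, hK, q, hline⟩ := hE.exists_norm_integral_le
  refine ⟨K * (1 + q) ^ q, 2 * q, fun r hr s hs => ?_⟩
  have hs1 : 1 < s.re := by rw [hs]; linarith [show 0 < 1 / r ^ 2 by positivity]
  have hq : 1 + q / (s.re - 1) ≤ (1 + q) * r ^ 2 := by
    rw [hs, add_sub_cancel_left, div_div_eq_mul_div, div_one, one_add_mul]
    gcongr
    exact one_le_pow₀ hr
  have : 0 ≤ q / (s.re - 1) := div_nonneg q.cast_nonneg (by linarith)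
  calc _ ≤ K * (1 + q / (s.re - 1)) ^ q := hline s hs1
    _ ≤ K * ((1 + q) * r ^ 2) ^ q := by gcongr
    _ = K * (1 + q) ^ q * r ^ (2 * q) := by rw [mul_pow, ← pow_mul, mul_assoc]

theorem LogBoxBounded.exists_norm_rieszMean_exp_le (hG : LogBoxBounded G) {E : ℝ → ℂ}
    (hE : HasPolylogGrowth E) (hmeas : Measurable E)
    (hmellin : ∀ s : ℂ, 1 < s.re → ∫ u in Set.Ioi (1 : ℝ), E u * (u : ℂ) ^ (-(s + 1)) = G s) :
    ∃ a > (0 : ℝ), ∀ᶠ r in atTop,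
      ‖rieszMean E (Real.exp (r ^ 2))‖ ≤ Real.exp (3 * r ^ 2 - a * r) := by
  obtain ⟨c, hc, hc1, p, hbox⟩ := hG.exists_le_one
  obtain ⟨K, q, hline⟩ := hE.exists_norm_integral_le_pow
  refine ⟨c / 2, by positivity, ?_⟩
  filter_upwards [Real.tendsto_exp_atTop.eventually hbox, eventually_ge_atTop (1 / c),
    eventually_mul_pow_mul_exp_neg_le (Real.pi + 4 * Real.exp 1 + 2 * Real.exp 1 * |K|) (p + q)
      (half_lt_self hc)] with r ⟨hdiff, hB⟩ hr habsorb
  rw [Real.log_exp] at hB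
  have hr1 : 1 ≤ r := (one_le_one_div hc hc1).trans hr
  have hσ : 1 < 1 + 1 / r ^ 2 := by linarith [show 0 < 1 / r ^ 2 by positivity]
  have hB' (s : ℂ) (hs : s ∈ logBox c (Real.exp r)) : ‖G s‖ ≤ r ^ (p + q) :=
    (hB s hs).trans (pow_le_pow_right₀ hr1 (Nat.le_add_right p q))
  have hM (s : ℂ) (hs : s.re = 1 + 1 / r ^ 2) : ‖G s‖ ≤ |K| * r ^ (p + q) := by
    rw [← hmellin s (hs ▸ hσ)]
    refine (hline r hr1 s hs).trans ?_
    gcongr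
    exacts [le_abs_self K, Nat.le_add_left q p]
  have hint := integrable_rieszIntegrand hE hmeas hmellin hσ (Real.exp_pos (r ^ 2))
  calc ‖rieszMean E (Real.exp (r ^ 2))‖
      ≤ ((Real.pi + 4 * Real.exp 1) * r ^ (p + q) + 2 * Real.exp 1 * (|K| * r ^ (p + q))) *
          Real.exp (3 * r ^ 2 - c * r) :=
        (norm_rieszMean_le hE hmeas hmellin hσ (Real.exp_pos (r ^ 2))).trans
          (norm_integral_rieszIntegrand_le hc hc1 hr hdiff hB' hM hint)
    _ = (Real.pi + 4 * Real.exp 1 + 2 * Real.exp 1 * |K|) * r ^ (p + q) * Real.exp (-c * r) *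
          Real.exp (3 * r ^ 2) := by
        rw [sub_eq_neg_add, Real.exp_add, neg_mul]
        ring
    _ ≤ Real.exp (-(c / 2) * r) * Real.exp (3 * r ^ 2) := by gcongr
    _ = Real.exp (3 * r ^ 2 - c / 2 * r) := by
        rw [← Real.exp_add, neg_mul, neg_add_eq_sub]

end ContourShift

section Unsmoothing

/-- The triangular kernel of height `h` supported on `[z - h, z + h]`, used to recover a function
from its Riesz means. -/
def tent (h z u : ℝ) : ℝ := max (h - |u - z|) 0

variable {E : ℝ → ℂ} {S : ℝ → ℝ} {M : ℝ → ℂ} {h z : ℝ}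

theorem tent_nonneg (h z u : ℝ) : 0 ≤ tent h z u := le_max_right _ _

theorem tent_eq_zero {u : ℝ} (hu : h ≤ |u - z|) : tent h z u = 0 :=
  max_eq_right (sub_nonpos.mpr hu)

theorem tent_eq_second_difference (hh : 0 ≤ h) (u : ℝ) :
    tent h z u = max (z + h - u) 0 - 2 * max (z - u) 0 + max (z - h - u) 0 := by
  unfold tent
  grind

theorem integrableOn_mul_max_sub (hE : HasPolylogGrowth E) (hmeas : Measurable E) (z : ℝ) :
    IntegrableOn (fun u => E u * (max (z - u) 0 : ℝ)) (Set.Ioi 1) := by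
  obtain ⟨K, m, hK⟩ := hE
  have hvanish : ∀ u ∈ Set.Ioi 1 \ Set.Ioc 1 z, E u * (max (z - u) 0 : ℝ) = 0 := fun u hu => by
    have : z < u := not_le.mp fun h => hu.2 ⟨hu.1, h⟩
    simp [max_eq_right (sub_nonpos.mpr this.le)]
  refine IntegrableOn.of_forall_sdiff_eq_zero ?_ measurableSet_Ioi hvanish
  refine Measure.integrableOn_of_bounded (M := |K| * (z * (1 + Real.log z) ^ m) * z) (by simp)
    (Measurable.aestronglyMeasurable (by fun_prop))
    ((ae_restrict_mem measurableSet_Ioc).mono fun u ⟨hu1, huz⟩ => ?_)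
  have hu0 : 0 < u := one_pos.trans hu1
  have hz0 : 0 < z := hu0.trans_le huz
  have hlog := Real.log_nonneg hu1.le
  have hE_le : ‖E u‖ ≤ |K| * (z * (1 + Real.log z) ^ m) := by
    refine (hK u hu1.le).trans ?_
    gcongr
    exact le_abs_self K
  rw [norm_mul, norm_real, max_eq_left (by linarith), Real.norm_of_nonneg (by linarith)]
  exact mul_le_mul hE_le (by linarith) (by linarith) ((norm_nonneg _).trans hE_le)

theorem integral_mul_tent (hE : HasPolylogGrowth E) (hmeas : Measurable E) (hh : 0 ≤ h) (z : ℝ) :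
    IntegrableOn (fun u => E u * (tent h z u : ℝ)) (Set.Ioi 1) ∧
    ∫ u in Set.Ioi (1 : ℝ), E u * (tent h z u : ℝ) =
      rieszMean E (z + h) - 2 * rieszMean E z + rieszMean E (z - h) := by
  have hright := integrableOn_mul_max_sub hE hmeas (z + h)
  have hmid := (integrableOn_mul_max_sub hE hmeas z).const_mul 2
  have hleft := integrableOn_mul_max_sub hE hmeas (z - h)
  have heq (u : ℝ) : E u * (tent h z u : ℝ) = E u * (max (z + h - u) 0 : ℝ) -
      2 * (E u * (max (z - u) 0 : ℝ)) + E u * (max (z - h - u) 0 : ℝ) := by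
    rw [tent_eq_second_difference hh]
    push_cast
    ring
  simp only [heq]
  refine ⟨(hright.sub hmid).add hleft, ?_⟩
  rw [integral_add (Integrable.sub' hright hmid) hleft, integral_sub hright hmid,
    integral_const_mul]
  rfl

theorem hasPolylogGrowth_one : HasPolylogGrowth fun _ => 1 :=
  ⟨1, 0, fun u hu => by simpa using hu⟩

theorem rieszMean_one (hz : 1 ≤ z) : rieszMean (fun _ => 1) z = ((z - 1) ^ 2 / 2 : ℝ) := by
  have hval : ∫ u in Set.Ioc 1 z, max (z - u) 0 = (z - 1) ^ 2 / 2 := by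
    calc ∫ u in Set.Ioc 1 z, max (z - u) 0
        = ∫ u in (1)..z, (z - u) := by
          rw [intervalIntegral.integral_of_le hz]
          exact setIntegral_congr_fun measurableSet_Ioc fun u hu =>
            max_eq_left (sub_nonneg.mpr hu.2)
      _ = (z - 1) ^ 2 / 2 := by
          rw [intervalIntegral.integral_sub (by simp) (by simp), intervalIntegral.integral_const,
            integral_id, smul_eq_mul]
          ring
  simp only [rieszMean, one_mul]
  rw [integral_complex_ofReal, ← hval]
  refine congrArg _ (setIntegral_eq_of_subset_of_forall_sdiff_eq_zero measurableSet_Ioi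
    Set.Ioc_subset_Ioi_self fun u hu => ?_)
  have : z < u := not_le.mp fun h => hu.2 ⟨hu.1, h⟩
  exact max_eq_right (sub_nonpos.mpr this.le)

theorem integral_tent (hh : 0 ≤ h) (hz : 1 ≤ z - h) :
    ∫ u in Set.Ioi (1 : ℝ), tent h z u = h ^ 2 := by
  have hsecond := (integral_mul_tent hasPolylogGrowth_one measurable_const hh z).2
  simp only [one_mul] at hsecond
  rw [integral_complex_ofReal, rieszMean_one (by linarith), rieszMean_one (by linarith),
    rieszMean_one hz] at hsecond
  apply ofReal_injective
  rw [hsecond]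
  push_cast
  ring

theorem integrableOn_tent (hh : 0 ≤ h) (z : ℝ) : IntegrableOn (tent h z) (Set.Ioi 1) := by
  simpa [IntegrableOn] using
    (integral_mul_tent hasPolylogGrowth_one measurable_const hh z).1.re

theorem norm_integral_mul_tent_sub_le (hM : HasPolylogGrowth M) (hmeas : Measurable M)
    (hh : 0 ≤ h) (hz : 1 ≤ z - h) {a : ℂ} {δ : ℝ} (hδ : ∀ u, |u - z| ≤ h → ‖M u - a‖ ≤ δ) :
    ‖(∫ u in Set.Ioi (1 : ℝ), M u * (tent h z u : ℝ)) - a * h ^ 2‖ ≤ δ * h ^ 2 := by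
  have htent := integrableOn_tent hh z
  have hconst_int : IntegrableOn (fun u => a * (tent h z u : ℂ)) (Set.Ioi 1) :=
    htent.ofReal.const_mul a
  have hconst : ∫ u in Set.Ioi (1 : ℝ), a * (tent h z u : ℝ) = a * h ^ 2 := by
    rw [integral_const_mul, integral_complex_ofReal, integral_tent hh hz, ofReal_pow]
  rw [← hconst, ← integral_sub (integral_mul_tent hM hmeas hh z).1 hconst_int,
    ← integral_tent hh hz, ← integral_const_mul]
  refine norm_integral_le_of_norm_le (htent.const_mul δ) (ae_of_all _ fun u => ?_)
  rw [← sub_mul, norm_mul, norm_real, Real.norm_of_nonneg (tent_nonneg h z u)]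
  rcases le_total (|u - z|) h with hu | hu
  · exact mul_le_mul_of_nonneg_right (hδ u hu) (tent_nonneg h z u)
  · simp [tent_eq_zero hu]

theorem norm_ofReal_sub_le_of_mem_Icc {l u t B : ℝ} {w : ℂ} (hl : ‖l - w‖ ≤ B)
    (hu : ‖u - w‖ ≤ B) (ht : t ∈ Set.Icc l u) : ‖t - w‖ ≤ B := by
  have hconv : Convex ℝ (ofReal ⁻¹' closedBall w B) :=
    (convex_closedBall w B).linear_preimage ofRealCLM.toLinearMap
  simpa [dist_eq_norm] using hconv.ordConnected.out
    (by simpa [dist_eq_norm] using hl) (by simpa [dist_eq_norm] using hu) ht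

variable {x : ℝ}

theorem mul_sq_mem_Icc_integral_mul_tent (hS : Monotone S)
    (hgrowth : HasPolylogGrowth fun u => (S u : ℂ)) (hh : 0 ≤ h) (hx : 1 ≤ x - 2 * h) :
    S x * h ^ 2 ∈ Set.Icc (∫ u in Set.Ioi (1 : ℝ), S u * tent h (x - h) u)
      (∫ u in Set.Ioi (1 : ℝ), S u * tent h (x + h) u) := by
  have hint (z : ℝ) : IntegrableOn (fun u => S u * tent h z u) (Set.Ioi 1) := by
    simpa [IntegrableOn] using
      (integral_mul_tent hgrowth (measurable_ofReal.comp hS.measurable) hh z).1.re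
  have hconst {z : ℝ} (hz : 1 ≤ z - h) :
      ∫ u in Set.Ioi (1 : ℝ), S x * tent h z u = S x * h ^ 2 := by
    rw [integral_const_mul, integral_tent hh hz]
  constructor
  · rw [← hconst (z := x - h) (by linarith)]
    refine integral_mono (hint _) ((integrableOn_tent hh _).const_mul _) fun u => ?_
    rcases le_total u x with hu | hu
    · exact mul_le_mul_of_nonneg_right (hS hu) (tent_nonneg _ _ _)
    · have : tent h (x - h) u = 0 := tent_eq_zero (by grind)
      simp [this]
  · rw [← hconst (z := x + h) (by linarith)]
    refine integral_mono ((integrableOn_tent hh _).const_mul _) (hint _) fun u => ?_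
    rcases le_total x u with hu | hu
    · exact mul_le_mul_of_nonneg_right (hS hu) (tent_nonneg _ _ _)
    · have : tent h (x + h) u = 0 := tent_eq_zero (by grind)
      simp [this]

theorem norm_integral_mul_tent_sub_le_of_norm_rieszMean_le {f : ℝ → ℂ} {δ₁ δ₂ : ℝ} {a : ℂ}
    (hf : HasPolylogGrowth f) (hfmeas : Measurable f)
    (hM : HasPolylogGrowth M) (hMmeas : Measurable M) (hh : 0 ≤ h) (hz : 1 ≤ z - h)
    (hδ₁ : ∀ w, |w - z| ≤ h → ‖rieszMean (fun u => f u - M u) w‖ ≤ δ₁)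
    (hδ₂ : ∀ u, |u - z| ≤ h → ‖M u - a‖ ≤ δ₂) :
    ‖(∫ u in Set.Ioi (1 : ℝ), f u * (tent h z u : ℝ)) - a * h ^ 2‖ ≤ 4 * δ₁ + δ₂ * h ^ 2 := by
  obtain ⟨hEint, hE⟩ := integral_mul_tent (hf.sub hM) (hfmeas.sub hMmeas) hh z
  have hsplit : ∫ u in Set.Ioi (1 : ℝ), f u * (tent h z u : ℝ) =
      (∫ u in Set.Ioi (1 : ℝ), (f u - M u) * (tent h z u : ℝ)) +
        ∫ u in Set.Ioi (1 : ℝ), M u * (tent h z u : ℝ) := by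
    rw [← integral_add hEint (integral_mul_tent hM hMmeas hh z).1]
    simp only [sub_mul, sub_add_cancel]
  have hright := hδ₁ (z + h) (by simp [abs_of_nonneg hh])
  have hmid := hδ₁ z (by simpa using hh)
  have hleft := hδ₁ (z - h) (by simp [abs_of_nonneg hh])
  have hE_le : ‖∫ u in Set.Ioi (1 : ℝ), (f u - M u) * (tent h z u : ℝ)‖ ≤ 4 * δ₁ := by
    rw [hE]
    refine (norm_add_le _ _).trans (add_le_add_left (norm_sub_le _ _) _) |>.trans ?_
    rw [norm_mul, norm_ofNat]
    linarith
  rw [hsplit, add_sub_assoc]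
  exact (norm_add_le _ _).trans
    (add_le_add hE_le (norm_integral_mul_tent_sub_le hM hMmeas hh hz hδ₂))

theorem norm_sub_le_of_norm_rieszMean_le {δ₁ δ₂ : ℝ} (hS : Monotone S)
    (hgrowth : HasPolylogGrowth fun u => (S u : ℂ)) (hM : HasPolylogGrowth M)
    (hmeas : Measurable M) (hh : 0 < h) (hx : 1 ≤ x - 2 * h)
    (hδ₁ : ∀ z, |z - x| ≤ 2 * h → ‖rieszMean (fun u => S u - M u) z‖ ≤ δ₁)
    (hδ₂ : ∀ u, |u - x| ≤ 2 * h → ‖M u - M x‖ ≤ δ₂) :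
    ‖S x - M x‖ ≤ 4 * δ₁ / h ^ 2 + δ₂ := by
  have hsmeared {z : ℝ} (hz : |z - x| = h) :
      ‖((∫ u in Set.Ioi (1 : ℝ), S u * tent h z u : ℝ) : ℂ) - M x * h ^ 2‖ ≤
        4 * δ₁ + δ₂ * h ^ 2 := by
    have htri (u : ℝ) (hu : |u - z| ≤ h) : |u - x| ≤ 2 * h :=
      (abs_sub_le u z x).trans (by linarith)
    rw [← integral_complex_ofReal]
    simp only [ofReal_mul]
    exact norm_integral_mul_tent_sub_le_of_norm_rieszMean_le hgrowth
      (measurable_ofReal.comp hS.measurable) hM hmeas hh.le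
      (by linarith [neg_abs_le (z - x)])
      (fun w hw => hδ₁ w (htri w hw)) (fun u hu => hδ₂ u (htri u hu))
  have hle := norm_ofReal_sub_le_of_mem_Icc (hsmeared (z := x - h) (by simp [abs_of_pos hh]))
    (hsmeared (z := x + h) (by simp [abs_of_pos hh]))
    (mul_sq_mem_Icc_integral_mul_tent hS hgrowth hh.le hx)
  have hh2 : 0 < h ^ 2 := by positivity
  rw [ofReal_mul, ofReal_pow, ← sub_mul, norm_mul, norm_pow, norm_real,
    Real.norm_of_nonneg hh.le, ← le_div_iff₀ hh2, add_div, mul_div_cancel_right₀ _ hh2.ne'] at hle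
  exact hle

end Unsmoothing

section Tauberian

variable {f M : ℝ → ℂ}

theorem tendsto_sqrt_log_atTop : Tendsto (fun x => √(Real.log x)) atTop atTop :=
  Real.tendsto_sqrt_atTop.comp Real.tendsto_log_atTop

theorem exp_sq_sqrt_log {x : ℝ} (hx : 1 ≤ x) : Real.exp (√(Real.log x) ^ 2) = x := by
  rw [Real.sq_sqrt (Real.log_nonneg hx), Real.exp_log (one_pos.trans_le hx)]

theorem half_sqrt_log_le_sqrt_log {x z : ℝ} (hx : 1 ≤ x) (hlog : 1 ≤ Real.log x)
    (hz : x / 2 ≤ z) : √(Real.log x) / 2 ≤ √(Real.log z) := by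
  refine Real.le_sqrt_of_sq_le ?_
  have := Real.log_le_log (by positivity) hz
  rw [Real.log_div (by positivity) two_ne_zero] at this
  rw [div_pow, Real.sq_sqrt (by linarith)]
  linarith [Real.log_two_lt_d9]

theorem eventually_forall_norm_le_of_exp_sq {a : ℝ} (ha : 0 ≤ a)
    (hf : ∀ᶠ r in atTop, ‖f (Real.exp (r ^ 2))‖ ≤ Real.exp (3 * r ^ 2 - a * r)) :
    ∀ᶠ x in atTop, ∀ z, |z - x| ≤ x / 2 →
      ‖f z‖ ≤ 8 * x ^ 3 * Real.exp (-(a / 2) * √(Real.log x)) := by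
  obtain ⟨z₀, hz₀⟩ := eventually_atTop.mp (tendsto_sqrt_log_atTop.eventually hf)
  filter_upwards [eventually_ge_atTop (2 * z₀), eventually_ge_atTop 2,
    Real.tendsto_log_atTop.eventually_ge_atTop 1] with x hxz hx hlog z hz
  obtain ⟨hz1, hz2⟩ := abs_le.mp hz
  have hsqrt := half_sqrt_log_le_sqrt_log (by linarith) hlog (by linarith : x / 2 ≤ z)
  have hfz := hz₀ z (by linarith)
  have hz0 : 1 ≤ z := by linarith
  have hcube : Real.exp (3 * √(Real.log z) ^ 2) = z ^ 3 := by
    conv_rhs => rw [← exp_sq_sqrt_log hz0]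
    exact_mod_cast Real.exp_nat_mul _ 3
  rw [exp_sq_sqrt_log hz0, sub_eq_add_neg, Real.exp_add, hcube] at hfz
  calc ‖f z‖ ≤ z ^ 3 * Real.exp (-(a * √(Real.log z))) := hfz
    _ ≤ (2 * x) ^ 3 * Real.exp (-(a / 2) * √(Real.log x)) := by
        gcongr
        · linarith
        · nlinarith
    _ = 8 * x ^ 3 * Real.exp (-(a / 2) * √(Real.log x)) := by ring

theorem PolylogLipschitz.eventually_norm_sub_le (hM : PolylogLipschitz M) :
    ∃ K : ℝ, 0 ≤ K ∧ ∃ m : ℕ, ∀ᶠ x in atTop, ∀ u, |u - x| ≤ x / 2 →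
      ‖M u - M x‖ ≤ K * (|u - x| * Real.log x ^ m) := by
  obtain ⟨K, hK, m, hlip⟩ := hM
  refine ⟨K * 3 ^ m, by positivity, m, ?_⟩
  filter_upwards [eventually_ge_atTop 2, Real.tendsto_log_atTop.eventually_ge_atTop 1]
    with x hx hlog u hu
  have hbound {v w : ℝ} (hv : 1 ≤ v) (hvw : v ≤ w) (hw : w ≤ 2 * x) :
      ‖M w - M v‖ ≤ K * 3 ^ m * ((w - v) * Real.log x ^ m) := by
    have hlogw : 1 + Real.log w ≤ 3 * Real.log x := by
      have := Real.log_le_log (by linarith) hw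
      rw [Real.log_mul two_ne_zero (by linarith)] at this
      linarith [Real.log_two_lt_d9]
    have := Real.log_nonneg (hv.trans hvw)
    calc ‖M w - M v‖ ≤ K * ((w - v) * (1 + Real.log w) ^ m) := hlip v w hv hvw
      _ ≤ K * ((w - v) * (3 * Real.log x) ^ m) := by
          gcongr
      _ = K * 3 ^ m * ((w - v) * Real.log x ^ m) := by ring
  obtain ⟨hu1, hu2⟩ := abs_le.mp hu
  rcases le_total u x with hux | hux
  · rw [norm_sub_rev, abs_sub_comm, abs_of_nonneg (sub_nonneg.mpr hux)]
    exact hbound (by linarith) hux (by linarith)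
  · rw [abs_of_nonneg (sub_nonneg.mpr hux)]
    exact hbound (by linarith) hux (by linarith)

/-- The two terms are the smoothing error, for Riesz means of size `8 x ^ 3 q ^ 4`, and the
variation of the main term, both at smoothing width `x q`. -/
theorem riesz_error_add_variation_le {x q K P : ℝ} (hx : 0 < x) (hq : 0 < q) (hq1 : q ≤ 1)
    (hP : 1 ≤ P) :
    4 * (8 * x ^ 3 * q ^ 4) / (x * q) ^ 2 + K * (2 * (x * q) * P) ≤
      x * ((32 + 2 * K) * P * q) := by
  calc 4 * (8 * x ^ 3 * q ^ 4) / (x * q) ^ 2 + K * (2 * (x * q) * P)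
      = x * (32 * q * q + 2 * K * P * q) := by
        field_simp
        ring
    _ ≤ x * (32 * P * q + 2 * K * P * q) := by
        gcongr
        exact hq1.trans hP
    _ = x * ((32 + 2 * K) * P * q) := by ring

theorem eventually_norm_sub_le_of_mellin_logBoxBounded {S : ℝ → ℝ} {G : ℂ → ℂ}
    (hS : Monotone S) (hgrowth : HasPolylogGrowth fun u => (S u : ℂ))
    (hM : PolylogLipschitz M) (hmeas : Measurable M) (hG : LogBoxBounded G)
    (hmellin : ∀ s : ℂ, 1 < s.re →
      ∫ u in Set.Ioi (1 : ℝ), (S u - M u) * (u : ℂ) ^ (-(s + 1)) = G s) :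
    ∃ c > (0 : ℝ), ∀ᶠ x in atTop, ‖S x - M x‖ ≤ x * Real.exp (-c * √(Real.log x)) := by
  obtain ⟨a, ha, hriesz⟩ := hG.exists_norm_rieszMean_exp_le (hgrowth.sub hM.hasPolylogGrowth)
    ((measurable_ofReal.comp hS.measurable).sub hmeas) hmellin
  obtain ⟨K, hK, m, hlip⟩ := hM.eventually_norm_sub_le
  refine ⟨a / 16, by positivity, ?_⟩
  filter_upwards [eventually_forall_norm_le_of_exp_sq ha.le hriesz, hlip, eventually_ge_atTop 2,
    tendsto_sqrt_log_atTop.eventually_ge_atTop 1,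
    tendsto_sqrt_log_atTop.eventually (eventually_mul_pow_mul_exp_neg_le 4 0
      (show 0 < a / 8 by positivity)),
    tendsto_sqrt_log_atTop.eventually (eventually_mul_pow_mul_exp_neg_le (32 + 2 * K) (2 * m)
      (show a / 16 < a / 8 by linarith))] with x hriesz hlip hx hr hsmall habsorb
  set r := √(Real.log x)
  have hlog : Real.log x = r ^ 2 := (Real.sq_sqrt (Real.log_nonneg (by linarith))).symm
  set q := Real.exp (-(a / 8) * r) with hq
  have hq4 : q ≤ 1 / 4 := by
    rw [pow_zero, neg_zero, zero_mul, Real.exp_zero] at hsmall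
    linarith
  have hq0 : 0 < q := Real.exp_pos _
  have hexp : Real.exp (-(a / 2) * r) = q ^ 4 := by
    rw [hq, ← Real.exp_nat_mul]
    ring_nf
  have hle := norm_sub_le_of_norm_rieszMean_le (h := x * q) hS hgrowth hM.hasPolylogGrowth hmeas
    (by positivity) (by nlinarith) (δ₂ := K * (2 * (x * q) * r ^ (2 * m)))
    (fun z hz => hriesz z (hz.trans (by nlinarith)))
    (fun u hu => (hlip u (hu.trans (by nlinarith))).trans (by
      rw [hlog, ← pow_mul]
      gcongr))
  calc ‖S x - M x‖
      ≤ 4 * (8 * x ^ 3 * q ^ 4) / (x * q) ^ 2 + K * (2 * (x * q) * r ^ (2 * m)) := hexp ▸ hle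
    _ ≤ x * ((32 + 2 * K) * r ^ (2 * m) * q) :=
        riesz_error_add_variation_le (by linarith) hq0 (by linarith) (one_le_pow₀ hr)
    _ ≤ x * Real.exp (-(a / 16) * r) := by gcongr

end Tauberian

section MellinError

variable {C A : ℕ → ℂ} {s : ℂ}

theorem hasPolylogGrowth_vonMangoldtPairSum (n : ℕ) :
    HasPolylogGrowth fun Y => (vonMangoldtPairSum n Y : ℂ) :=
  ⟨1, n + 1, fun Y hY => by
    rw [one_mul, norm_real]
    exact norm_vonMangoldtPairSum_le n hY⟩

theorem integral_vonMangoldtPairSum_sub_Mterm (n : ℕ)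
    (hC : ∀ᶠ s in 𝓝[≠] (1 : ℂ),
      HasSum (fun j : ℕ => C j * (s - 1) ^ j) (riemannZeta s - 1 / (s - 1)))
    (hA : ∀ᶠ s in 𝓝[≠] (1 : ℂ), HasSum (fun j : ℕ => A j * (s - 1) ^ j)
      (deriv riemannZeta s / riemannZeta s + 1 / (s - 1))) (hs : 1 < s.re) :
    ∫ u in Set.Ioi (1 : ℝ),
        ((vonMangoldtPairSum n u : ℂ) - (-1) ^ (n + 1) * Mterm C A n u) * (u : ℂ) ^ (-(s + 1)) =
      (-1) ^ (n + 1) * pairSumRegular n s := by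
  have hs1 : s ≠ 1 := by
    rintro rfl
    exact absurd hs (by simp)
  have hS := (hasPolylogGrowth_vonMangoldtPairSum n).integrableOn_mul_cpow
    (measurable_ofReal.comp (monotone_vonMangoldtPairSum n).measurable) hs
  have hM := (polylogLipschitz_Mterm C A n).hasPolylogGrowth.integrableOn_mul_cpow
    (measurable_Mterm C A n) hs
  have hpolar := (integral_vonMangoldtPairSum n hs).trans
    (riemannZeta_div_self_mul_eq (by linarith) hs1 hC hA n)
  rw [← integral_Mterm C A n hs, ← sub_eq_iff_eq_add'] at hpolar
  simp only [sub_mul, mul_assoc]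
  rw [integral_sub hS (hM.const_mul _), integral_const_mul, ← hpolar, mul_sub, ← mul_assoc,
    ← mul_pow, neg_one_mul, neg_neg, one_pow, one_mul]

end MellinError

/-- as `Y → ∞`,
`(-1)^{n+1} ∑_{mr ≤ Y} Λ(r) log^n r = M_n(Y) + O(Y e^{-C√(log Y)})`. -/
theorem vonMangoldt_sum_asymptotic (n : ℕ) (hn : 1 ≤ n) (C A : ℕ → ℂ)
    (hC : ∀ᶠ s in nhdsWithin (1 : ℂ) {(1 : ℂ)}ᶜ,
      HasSum (fun j : ℕ => C j * (s - 1) ^ j) (riemannZeta s - 1 / (s - 1)))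
    (hA : ∀ᶠ s in nhdsWithin (1 : ℂ) {(1 : ℂ)}ᶜ,
      HasSum (fun j : ℕ => A j * (s - 1) ^ j)
        (deriv riemannZeta s / riemannZeta s + 1 / (s - 1))) :
    ∃ c > (0 : ℝ), ∃ K > (0 : ℝ), ∃ Y₀ : ℝ, ∀ Y ≥ Y₀,
      ‖(-1 : ℂ) ^ (n + 1) * ((vonMangoldtPairSum n Y : ℝ) : ℂ) - Mterm C A n Y‖ ≤
        K * Y * Real.exp (-c * Real.sqrt (Real.log Y)) := by
  obtain ⟨c, hc, h⟩ := eventually_norm_sub_le_of_mellin_logBoxBounded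
    (monotone_vonMangoldtPairSum n) (hasPolylogGrowth_vonMangoldtPairSum n)
    ((polylogLipschitz_Mterm C A n).const_mul ((-1) ^ (n + 1)))
    ((measurable_Mterm C A n).const_mul _)
    ((logBoxBounded_pairSumRegular n).const_mul ((-1) ^ (n + 1)))
    fun s hs => integral_vonMangoldtPairSum_sub_Mterm n hC hA hs
  obtain ⟨Y₀, hY₀⟩ := eventually_atTop.mp h
  refine ⟨c, hc, 1, one_pos, Y₀, fun Y hY => ?_⟩
  have hsign : ((-1 : ℂ) ^ (n + 1)) * (-1) ^ (n + 1) = 1 := by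
    rw [← mul_pow, neg_one_mul, neg_neg, one_pow]
  calc ‖(-1 : ℂ) ^ (n + 1) * (vonMangoldtPairSum n Y : ℂ) - Mterm C A n Y‖
      = ‖(-1 : ℂ) ^ (n + 1) * (vonMangoldtPairSum n Y - (-1) ^ (n + 1) * Mterm C A n Y)‖ := by
        rw [mul_sub, ← mul_assoc _ _ (Mterm C A n Y), hsign, one_mul]
    _ = ‖vonMangoldtPairSum n Y - (-1) ^ (n + 1) * Mterm C A n Y‖ := by
        rw [norm_mul, norm_pow, norm_neg, norm_one, one_pow, one_mul]
    _ ≤ 1 * Y * Real.exp (-c * Real.sqrt (Real.log Y)) := by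
        rw [one_mul]
        exact hY₀ Y hY
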